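/- Let f : bD → ℂ be the restriction to bD of a continuously differentiable function on ℂ². Then the function F : D → ℂ defined by F(z) = ∫_{bD} f(w)·Δ(w,z)^{−2} dH³(w) is given by an absolutely convergent integral for every z ∈ D, and F extends to a continuous function on the closure of D; that is, there exists a continuous function G on the closure of D with G(z) = F(z) for all z ∈ D. -/

import Mathlib

open MeasureTheory Complex

noncomputable section

/-- `ℂ²` with the Euclidean metric. -/
abbrev C2 := EuclideanSpace ℂ (Fin 2)

instance : MeasurableSpace C2 := borel _
instance : BorelSpace C2 := ⟨rfl⟩

/-- The defining function `ρ(z) = |z₂|² + (Re z₁)² + (Im z₁)⁴ − 1`. -/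
def rho (z : C2) : ℝ := ‖z 1‖ ^ 2 + (z 0).re ^ 2 + (z 0).im ^ 4 - 1

/-- The boundary `bD = {ρ = 0}`. -/
def bD : Set C2 := {z | rho z = 0}

/-- The Cauchy–Leray denominator
`Δ(w,z) = (u₁ − 2i v₁³)(w₁ − z₁) + conj(w₂)(w₂ − z₂)`. -/
def Delta (w z : C2) : ℂ :=
  (((w 0).re : ℂ) - 2 * I * ((w 0).im : ℂ) ^ 3) * (w 0 - z 0)
    + (starRingEnd ℂ) (w 1) * (w 1 - z 1)
/-- The domain `D = {ρ < 0}`. -/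
def D : Set C2 := {z | rho z < 0}

open Set Filter Topology

instance instHaarX : (volume : Measure (ℝ × ℂ)).IsAddHaarMeasure :=
  inferInstanceAs ((volume : Measure ℝ).prod (volume : Measure ℂ)).IsAddHaarMeasure

abbrev Y3 := EuclideanSpace ℝ (Fin 3)

lemma finrankX : Module.finrank ℝ (ℝ × ℂ) = 3 := by
  simp [Module.finrank_prod, Complex.finrank_real_complex]

/-- a fixed linear identification -/
def eX : (ℝ × ℂ) ≃L[ℝ] Y3 :=
  ContinuousLinearEquiv.ofFinrankEq (by rw [finrankX]; simp)

/-- Jacobian factor of a linear map -/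
def jac (L : (ℝ × ℂ) →L[ℝ] C2) : ℝ :=
  ((L ∘L (eX.symm : Y3 →L[ℝ] (ℝ × ℂ))) : Y3 →ₗ[ℝ] C2).normDet

lemma linear_area : ∃ c : NNReal, ∀ (L : (ℝ × ℂ) →L[ℝ] C2) (A : Set (ℝ × ℂ)),
    μH[3] (L '' A) = ENNReal.ofReal (c * jac L) * volume A := by
  have hfin : ((Module.finrank ℝ Y3 : ℕ) : ℝ) = 3 := by simp
  have h1 : (μH[3] : Measure Y3).IsAddHaarMeasure := by
    have := isAddHaarMeasure_hausdorffMeasure (E := Y3)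
    rwa [hfin] at this
  let ν : Measure (ℝ × ℂ) := Measure.map eX.symm (μH[3] : Measure Y3)
  have : ν.IsAddHaarMeasure := ContinuousLinearEquiv.isAddHaarMeasure_map _ _
  obtain ⟨c, hν⟩ : ∃ c : NNReal, ν = c • volume :=
    ⟨_, Measure.isAddLeftInvariant_eq_smul ν volume⟩
  refine ⟨c, fun L A => ?_⟩
  have h2 : (μH[3] : Measure Y3) (eX '' A) = ν A := by
    have : ν A = (μH[3] : Measure Y3) (eX.symm ⁻¹' A) :=
      (eX.symm.toHomeomorph.toMeasurableEquiv).map_apply A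
    rw [this]
    congr 1
    exact eX.image_eq_preimage_symm A
  have h3 := LinearMap.hausdorffMeasure_image
    ((L ∘L (eX.symm : Y3 →L[ℝ] (ℝ × ℂ))) : Y3 →ₗ[ℝ] C2) (eX '' A)
  rw [hfin, h2] at h3
  have h4 : ((L ∘L (eX.symm : Y3 →L[ℝ] (ℝ × ℂ))) : Y3 →ₗ[ℝ] C2) '' (eX '' A) = L '' A := by
    rw [image_image]; simp
  rw [h4] at h3
  rw [h3, hν, Measure.smul_apply, ENNReal.ofReal_mul (NNReal.coe_nonneg _)]
  rw [ENNReal.ofReal_coe_nnreal, ENNReal.smul_def, smul_eq_mul, ← mul_assoc, jac]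
  congr 1
  rw [mul_comm]

lemma jac_nonneg (L : (ℝ × ℂ) →L[ℝ] C2) : 0 ≤ jac L := LinearMap.normDet_nonneg _

lemma jac_eq (L : (ℝ × ℂ) →L[ℝ] C2) : jac L = Real.sqrt
    (Matrix.det (Matrix.of fun i j : Fin 3 => inner ℝ (L (eX.symm (EuclideanSpace.single i 1)))
      (L (eX.symm (EuclideanSpace.single j 1))))) := by
  have h := LinearMap.normDet_sq_eq_det_gram
    ((L ∘L (eX.symm : Y3 →L[ℝ] (ℝ × ℂ))) : Y3 →ₗ[ℝ] C2) (EuclideanSpace.basisFun (Fin 3) ℝ)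
  rw [← Real.sqrt_sq (jac_nonneg L)]
  congr 1
  convert! h using 2
  ext i j
  simp [Matrix.gram]

lemma jac_pos {L : (ℝ × ℂ) →L[ℝ] C2} (h : Function.Injective L) : 0 < jac L := by
  refine lt_of_le_of_ne (jac_nonneg L) (Ne.symm ?_)
  refine ((LinearMap.normDet_ne_zero_tfae _).out 0 4).mpr ?_
  exact h.comp eX.symm.injective

lemma contDiff_jac {φ : ℝ × ℂ → C2} (hφ : ContDiff ℝ 2 φ)
    (hinj : ∀ x, Function.Injective (fderiv ℝ φ x)) :
    ContDiff ℝ 1 (fun x => jac (fderiv ℝ φ x)) := by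
  have h0 : ∀ x, 0 < jac (fderiv ℝ φ x) := fun x => jac_pos (hinj x)
  simp only [jac_eq] at h0 ⊢
  have hd : ContDiff ℝ 1 (fderiv ℝ φ) := hφ.fderiv_right (by norm_num)
  refine ContDiff.sqrt ?_ (fun x => (Real.sqrt_pos.mp (h0 x)).ne')
  simp only [Matrix.det_fin_three, Matrix.of_apply]
  have : ∀ i j : Fin 3, ContDiff ℝ 1 (fun x => inner ℝ
    (fderiv ℝ φ x (eX.symm (EuclideanSpace.single i 1)))
      (fderiv ℝ φ x (eX.symm (EuclideanSpace.single j 1)))) := fun i j =>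
    (hd.clm_apply contDiff_const).inner ℝ (hd.clm_apply contDiff_const)
  fun_prop (disch := assumption)

lemma local_compare {φ : ℝ × ℂ → C2} (hφ : ContDiff ℝ 2 φ) (π : C2 →L[ℝ] (ℝ × ℂ))
    (hπ : ∀ x, π (φ x) = x) (hπL : ∀ x v, π (fderiv ℝ φ x v) = v) (x : ℝ × ℂ) (ε : NNReal)
    (hε : 0 < ε) :
    ∃ s ∈ 𝓝 x, ∀ A ⊆ s, μH[3] (φ '' A) ≤ (1 + ε : NNReal) ^ (3:ℝ) * μH[3] (fderiv ℝ φ x '' A) ∧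
      μH[3] (fderiv ℝ φ x '' A) ≤ (1 + ε : NNReal) ^ (3:ℝ) * μH[3] (φ '' A) := by
  set L := fderiv ℝ φ x with hL
  have hs : HasStrictFDerivAt φ L x := hφ.contDiffAt.hasStrictFDerivAt (by norm_num)
  obtain ⟨s, hs, happ⟩ := hs.approximates_deriv_on_nhds (c := ε / (‖π‖₊ + 1)) (Or.inr (by positivity))
  have key : ∀ y y' : ℝ × ℂ, ∀ q : ℝ, ‖y - y'‖ ≤ ‖π‖ * q →
      (ε / (‖π‖₊ + 1) : NNReal) * ‖y - y'‖ ≤ ε * q := by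
    intro y y' q hq
    have h1 : 0 ≤ q ∨ ‖π‖ = 0 := by
      by_cases h : ‖π‖ = 0
      · exact Or.inr h
      · left
        have : 0 ≤ ‖π‖ * q := le_trans (norm_nonneg _) hq
        exact nonneg_of_mul_nonneg_right this (lt_of_le_of_ne (norm_nonneg _) (Ne.symm h))
    have hq0 : 0 ≤ q := by
      rcases h1 with h1 | h1
      · exact h1
      · exfalso
        have h2 : π (φ (1, 0)) = 0 := by
          rw [norm_eq_zero] at h1; rw [h1]; rfl
        rw [hπ] at h2
        simp at h2
    push_cast
    rw [div_mul_eq_mul_div, div_le_iff₀ (by positivity)]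
    have : (ε:ℝ) * ‖y - y'‖ ≤ ε * (‖π‖ * q) := by gcongr
    have h3 : 0 ≤ (ε:ℝ) * q := by positivity
    nlinarith
  have hLn : ∀ y y', ‖y - y'‖ ≤ ‖π‖ * ‖L y - L y'‖ := fun y y' => by
    have := π.le_opNorm (L (y - y'))
    rwa [hπL, map_sub] at this
  have hφn : ∀ y y', ‖y - y'‖ ≤ ‖π‖ * ‖φ y - φ y'‖ := fun y y' => by
    have := π.le_opNorm (φ y - φ y')
    rwa [map_sub, hπ, hπ] at this
  refine ⟨s, hs, fun A hA => ⟨?_, ?_⟩⟩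
  · have : φ '' A = (φ ∘ π) '' (L '' A) := by
      rw [image_image]; simp [hL, hπL]
    rw [this]
    refine LipschitzOnWith.hausdorffMeasure_image_le ?_ (by norm_num)
    refine LipschitzOnWith.of_dist_le_mul ?_
    rintro _ ⟨y, hy, rfl⟩ _ ⟨y', hy', rfl⟩
    simp only [Function.comp, hL, hπL, dist_eq_norm]
    rw [← hL]
    have h1 := happ y (hA hy) y' (hA hy')
    have h2 := key y y' _ (hLn y y')
    have h3 : ‖φ y - φ y'‖ ≤ ‖φ y - φ y' - L (y - y')‖ + ‖L (y - y')‖ := by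
      simpa using norm_add_le (φ y - φ y' - L (y - y')) (L (y - y'))
    rw [map_sub] at h1 h3
    push_cast at h2 ⊢
    push_cast at h1
    linarith
  · have : L '' A = (L ∘ π) '' (φ '' A) := by
      rw [image_image]; simp [hπ]
    rw [this]
    refine LipschitzOnWith.hausdorffMeasure_image_le ?_ (by norm_num)
    refine LipschitzOnWith.of_dist_le_mul ?_
    rintro _ ⟨y, hy, rfl⟩ _ ⟨y', hy', rfl⟩
    simp only [Function.comp, hπ, dist_eq_norm]
    have h1 := happ y (hA hy) y' (hA hy')
    have h2 := key y y' _ (hφn y y')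
    have h3 : ‖L (y - y')‖ ≤ ‖φ y - φ y'‖ + ‖φ y - φ y' - L (y - y')‖ := by
      simpa using norm_sub_le (φ y - φ y') (φ y - φ y' - L (y - y'))
    rw [map_sub] at h1 h3
    push_cast at h2 ⊢
    push_cast at h1
    linarith

theorem area_graph {φ : ℝ × ℂ → C2} (hφ : ContDiff ℝ 2 φ) (π : C2 →L[ℝ] (ℝ × ℂ))
    (hπ : ∀ x, π (φ x) = x) : ∃ J : ℝ × ℂ → ℝ, ContDiff ℝ 1 J ∧ (∀ x, 0 ≤ J x) ∧
      Measure.map π ((μH[3] : Measure C2).restrict {w | φ (π w) = w}) =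
        volume.withDensity (fun x => ENNReal.ofReal (J x)) := by
  obtain ⟨c, hc⟩ := linear_area
  have hπL : ∀ x v, π (fderiv ℝ φ x v) = v := by
    intro x v
    have h1 : HasFDerivAt (fun x => π (φ x)) (π ∘L fderiv ℝ φ x) x :=
      π.hasFDerivAt.comp x (hφ.differentiable (by norm_num) x).hasFDerivAt
    have h2 : (fun x => π (φ x)) = fun x => x := funext hπ
    rw [h2] at h1
    have := h1.unique (hasFDerivAt_id x)
    exact congrArg (fun T => T v) this
  set J : ℝ × ℂ → ℝ := fun x => c * jac (fderiv ℝ φ x) with hJ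
  have hJc : ContDiff ℝ 1 J := contDiff_const.mul
    (contDiff_jac hφ fun x => Function.LeftInverse.injective (hπL x))
  have hJ0 : ∀ x, 0 ≤ J x := fun x => mul_nonneg c.2 (jac_nonneg _)
  refine ⟨J, hJc, hJ0, ?_⟩
  set ν := Measure.map π ((μH[3] : Measure C2).restrict {w | φ (π w) = w}) with hν
  have hνA : ∀ A, MeasurableSet A → ν A = μH[3] (φ '' A) := by
    intro A hA
    rw [hν, Measure.map_apply π.continuous.measurable hA,
      Measure.restrict_apply (π.continuous.measurable hA)]
    congr 1
    ext w
    constructor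
    · rintro ⟨h1, h2⟩
      exact ⟨π w, h1, h2⟩
    · rintro ⟨x, h1, rfl⟩
      exact ⟨by simpa [hπ] using h1, by simp [hπ]⟩
  have hcmp : ∀ x, ∀ ε : NNReal, 0 < ε → ∃ s ∈ 𝓝 x, ∀ A ⊆ s,
      μH[3] (φ '' A) ≤ (1 + ε : NNReal) ^ (3:ℝ) * (ENNReal.ofReal (J x) * volume A) ∧
      ENNReal.ofReal (J x) * volume A ≤ (1 + ε : NNReal) ^ (3:ℝ) * μH[3] (φ '' A) := by
    intro x ε hε
    obtain ⟨s, hs, h⟩ := local_compare hφ π hπ hπL x ε hε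
    refine ⟨s, hs, fun A hA => ?_⟩
    have := h A hA
    rwa [hc] at this
  have hfin : ∀ x : ℝ × ℂ, ν.FiniteAtFilter (𝓝 x) := by
    intro x
    obtain ⟨s, hs, h⟩ := hcmp x 1 one_pos
    obtain ⟨r, hr, hrs⟩ := Metric.nhds_basis_closedBall.mem_iff.mp hs
    refine ⟨Metric.closedBall x r, Metric.closedBall_mem_nhds x hr, ?_⟩
    rw [hνA _ Metric.isClosed_closedBall.measurableSet]
    refine (h _ hrs).1.trans_lt ?_
    refine ENNReal.mul_lt_top ?_ (ENNReal.mul_lt_top ENNReal.ofReal_lt_top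
      (isCompact_closedBall x r).measure_lt_top)
    exact ENNReal.rpow_lt_top_of_nonneg (by norm_num) ENNReal.coe_ne_top
  have : IsLocallyFiniteMeasure ν := ⟨hfin⟩
  have hac : ν ≪ volume := by
    refine Measure.AbsolutelyContinuous.mk fun A hA hA0 => ?_
    refine measure_null_of_locally_null A fun x _ => ?_
    obtain ⟨s, hs, h⟩ := hcmp x 1 one_pos
    obtain ⟨r, hr, hrs⟩ := Metric.nhds_basis_closedBall.mem_iff.mp hs
    refine ⟨Metric.closedBall x r ∩ A, inter_comm A _ ▸ inter_mem_nhdsWithin _ (Metric.closedBall_mem_nhds x hr), ?_⟩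
    rw [hνA _ (Metric.isClosed_closedBall.measurableSet.inter hA)]
    refine le_antisymm ((h _ (inter_subset_left.trans hrs)).1.trans ?_) bot_le
    rw [measure_mono_null inter_subset_right hA0]; simp
  rw [← Measure.withDensity_rnDeriv_eq ν volume hac]
  refine withDensity_congr_ae ?_
  filter_upwards [Besicovitch.ae_tendsto_rnDeriv ν volume] with x hx
  set R := ν.rnDeriv volume x with hR
  have hbd : ∀ ε : NNReal, 0 < ε → R ≤ (1 + ε : NNReal) ^ (3:ℝ) * ENNReal.ofReal (J x) ∧
      ENNReal.ofReal (J x) ≤ (1 + ε : NNReal) ^ (3:ℝ) * R := by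
    intro ε hε
    obtain ⟨s, hs, h⟩ := hcmp x ε hε
    obtain ⟨r, hr, hrs⟩ := Metric.nhds_basis_closedBall.mem_iff.mp hs
    have hev : ∀ᶠ t in 𝓝[>] (0:ℝ), 0 < t ∧ t ≤ r := by
      filter_upwards [Ioc_mem_nhdsGT hr] with t ht using ht
    have hvol : ∀ t, 0 < t → volume (Metric.closedBall x t) ≠ 0 := fun t ht =>
      (Metric.measure_closedBall_pos _ _ ht).ne'
    have hvol' : ∀ t, volume (Metric.closedBall x t) ≠ ⊤ := fun t =>
      (isCompact_closedBall x t).measure_lt_top.ne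
    constructor
    · refine le_of_tendsto hx ?_
      filter_upwards [hev] with t ht
      rw [ENNReal.div_le_iff (hvol t ht.1) (hvol' t), hνA _ Metric.isClosed_closedBall.measurableSet,
        mul_assoc]
      exact (h _ ((Metric.closedBall_subset_closedBall ht.2).trans hrs)).1
    · have : Tendsto (fun t => (1 + ε : NNReal) ^ (3:ℝ) * (ν (Metric.closedBall x t) /
        volume (Metric.closedBall x t))) (𝓝[>] 0) (𝓝 ((1 + ε : NNReal) ^ (3:ℝ) * R)) := by
        refine ENNReal.Tendsto.const_mul hx (Or.inr ?_)
        exact (ENNReal.rpow_lt_top_of_nonneg (by norm_num) ENNReal.coe_ne_top).ne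
      refine ge_of_tendsto this ?_
      filter_upwards [hev] with t ht
      rw [← mul_div_assoc, ENNReal.le_div_iff_mul_le (Or.inl (hvol t ht.1)) (Or.inl (hvol' t)),
        hνA _ Metric.isClosed_closedBall.measurableSet]
      exact (h _ ((Metric.closedBall_subset_closedBall ht.2).trans hrs)).2
  have hlim : ∀ q : ENNReal, q ≠ ⊤ → Tendsto (fun ε : NNReal => ((1 + ε : NNReal) : ENNReal) ^ (3:ℝ) * q)
      (𝓝[>] 0) (𝓝 q) := by
    intro q hq
    have h1 : Continuous fun ε : NNReal => ((1 + ε : NNReal) : ENNReal) ^ (3:ℝ) * q := by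
      refine ENNReal.continuous_mul_const hq |>.comp ?_
      refine ENNReal.continuous_rpow_const.comp ?_
      exact ENNReal.continuous_coe.comp (by fun_prop)
    have h2 := (h1.tendsto 0).mono_left (nhdsWithin_le_nhds (s := Ioi 0))
    simpa using h2
  have hRt : R ≠ ⊤ := by
    refine ((hbd 1 one_pos).1.trans_lt (ENNReal.mul_lt_top ?_ ENNReal.ofReal_lt_top)).ne
    exact ENNReal.rpow_lt_top_of_nonneg (by norm_num) ENNReal.coe_ne_top
  refine le_antisymm ?_ ?_
  · refine ge_of_tendsto (hlim _ ENNReal.ofReal_ne_top) ?_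
    filter_upwards [self_mem_nhdsWithin] with ε hε using (hbd ε hε).1
  · refine ge_of_tendsto (hlim _ hRt) ?_
    filter_upwards [self_mem_nhdsWithin] with ε hε using (hbd ε hε).2

lemma two_re_Delta (w z : C2) (hw : w ∈ bD) :
    2 * (Delta w z).re = -rho z + ‖w 1 - z 1‖ ^ 2 + ((w 0).re - (z 0).re) ^ 2
      + ((z 0).im - (w 0).im) ^ 2 * (((z 0).im + (w 0).im) ^ 2 + 2 * (w 0).im ^ 2) := by
  have hw' : ‖w 1‖ ^ 2 + (w 0).re ^ 2 + (w 0).im ^ 4 - 1 = 0 := hw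
  have e : (Delta w z).re = (w 0).re * ((w 0).re - (z 0).re)
      + 2 * (w 0).im ^ 3 * ((w 0).im - (z 0).im)
      + (w 1).re * ((w 1).re - (z 1).re) + (w 1).im * ((w 1).im - (z 1).im) := by
    have h3 : (((w 0).im : ℂ) ^ 3) = (((w 0).im ^ 3 : ℝ) : ℂ) := by push_cast; rfl
    unfold Delta
    rw [h3]
    simp [-Complex.ofReal_pow]
    ring
  rw [← Complex.normSq_eq_norm_sq, Complex.normSq_apply] at hw'
  rw [e]
  unfold rho
  rw [← Complex.normSq_eq_norm_sq, Complex.normSq_apply, ← Complex.normSq_eq_norm_sq,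
    Complex.normSq_apply]
  simp only [Complex.sub_re, Complex.sub_im]
  linear_combination (2:ℝ) * 0 * hw' + hw'

lemma Delta_lower1 (w z : C2) (hw : w ∈ bD) : -rho z / 2 ≤ ‖Delta w z‖ := by
  have h := two_re_Delta w z hw
  have h2 := (le_abs_self _).trans (Complex.abs_re_le_norm (Delta w z))
  nlinarith [sq_nonneg (‖w 1 - z 1‖), sq_nonneg ((w 0).re - (z 0).re),
    mul_nonneg (sq_nonneg ((z 0).im - (w 0).im)) (add_nonneg (sq_nonneg ((z 0).im + (w 0).im))
      (mul_nonneg zero_le_two (sq_nonneg (w 0).im)))]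

lemma rho_bounds (z : C2) (hz : rho z ≤ 0) : ‖z 1‖ ≤ 1 ∧ |(z 0).re| ≤ 1 ∧ |(z 0).im| ≤ 1 := by
  unfold rho at hz
  have h4 : 0 ≤ (z 0).im ^ 4 := by positivity
  refine ⟨?_, ?_, ?_⟩
  · nlinarith [norm_nonneg (z 1), sq_nonneg (z 0).re]
  · refine abs_le_one_iff_mul_self_le_one.mpr ?_
    nlinarith [sq_nonneg (‖z 1‖)]
  · refine abs_le_one_iff_mul_self_le_one.mpr ?_
    nlinarith [sq_nonneg (‖z 1‖), sq_nonneg (z 0).re, sq_nonneg ((z 0).im ^ 2 - 1)]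

lemma Delta_lower2 (w z : C2) (hw : w ∈ bD) (hz : rho z ≤ 0) (j : Fin 2) :
    ‖w j - z j‖ ^ 4 / 16 ≤ ‖Delta w z‖ := by
  have h := two_re_Delta w z hw
  have h2 := (le_abs_self _).trans (Complex.abs_re_le_norm (Delta w z))
  obtain ⟨a1, a2, a3⟩ := rho_bounds z hz
  obtain ⟨b1, b2, b3⟩ := rho_bounds w (le_of_eq hw)
  have hB : ((z 0).im - (w 0).im) ^ 4 / 4 ≤ ((z 0).im - (w 0).im) ^ 2 *
      (((z 0).im + (w 0).im) ^ 2 + 2 * (w 0).im ^ 2) := by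
    have : ((z 0).im - (w 0).im) ^ 2 / 4 ≤ ((z 0).im + (w 0).im) ^ 2 + 2 * (w 0).im ^ 2 := by
      nlinarith [sq_nonneg ((z 0).im + 3 * (w 0).im), sq_nonneg ((z 0).im + (w 0).im),
        sq_nonneg ((w 0).im)]
    nlinarith [mul_le_mul_of_nonneg_left this (sq_nonneg ((z 0).im - (w 0).im))]
  have hn := norm_nonneg (w 1 - z 1)
  fin_cases j
  · simp only [Fin.zero_eta]
    have e : ‖w 0 - z 0‖ ^ 2 = ((w 0).re - (z 0).re) ^ 2 + ((z 0).im - (w 0).im) ^ 2 := by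
      rw [← Complex.normSq_eq_norm_sq, Complex.normSq_apply]
      simp only [Complex.sub_re, Complex.sub_im]; ring
    have e4 : ‖w 0 - z 0‖ ^ 4 = (((w 0).re - (z 0).re) ^ 2 + ((z 0).im - (w 0).im) ^ 2) ^ 2 := by
      rw [← e]; ring
    rw [e4]
    rw [abs_le] at a2 b2
    set p := (w 0).re - (z 0).re
    set q := (z 0).im - (w 0).im
    have hp : p ^ 2 ≤ 4 := by
      have : |p| ≤ 2 := abs_le.mpr ⟨by simp only [p]; linarith, by simp only [p]; linarith⟩
      nlinarith [sq_abs p, abs_nonneg p]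
    have hp4 : p ^ 2 * p ^ 2 ≤ 4 * p ^ 2 := mul_le_mul_of_nonneg_right hp (sq_nonneg p)
    nlinarith [sq_nonneg (p ^ 2 - q ^ 2), sq_nonneg (‖w 1 - z 1‖), sq_nonneg p]
  · simp only [Fin.mk_one]
    have h5 : ‖w 1 - z 1‖ ≤ 2 := (norm_sub_le _ _).trans (by linarith)
    have h6 : ‖w 1 - z 1‖ ^ 2 ≤ 4 := by nlinarith
    have h7 : ‖w 1 - z 1‖ ^ 2 * ‖w 1 - z 1‖ ^ 2 ≤ 4 * ‖w 1 - z 1‖ ^ 2 :=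
      mul_le_mul_of_nonneg_right h6 (sq_nonneg _)
    have h8 : 0 ≤ ((z 0).im - (w 0).im) ^ 4 := by positivity
    nlinarith [sq_nonneg ((w 0).re - (z 0).re)]

lemma continuous_rho : Continuous rho := by unfold rho; fun_prop

lemma contDiff_Delta : ContDiff ℝ 2 (fun p : C2 × C2 => Delta p.1 p.2) := by
  have h : ∀ i : Fin 2, ContDiff ℝ 2 (fun w : C2 => w i) := fun i =>
    (EuclideanSpace.proj (𝕜 := ℂ) i : C2 →L[ℂ] ℂ).restrictScalars ℝ |>.contDiff
  have h1 : ∀ i : Fin 2, ContDiff ℝ 2 (fun p : C2 × C2 => p.1 i) := fun i => (h i).comp contDiff_fst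
  have h2 : ∀ i : Fin 2, ContDiff ℝ 2 (fun p : C2 × C2 => p.2 i) := fun i => (h i).comp contDiff_snd
  have hre : ContDiff ℝ 2 (fun p : C2 × C2 => (((p.1 0).re : ℝ) : ℂ)) :=
    (Complex.ofRealCLM.contDiff.comp Complex.reCLM.contDiff).comp (h1 0)
  have him : ContDiff ℝ 2 (fun p : C2 × C2 => (((p.1 0).im : ℝ) : ℂ)) :=
    (Complex.ofRealCLM.contDiff.comp Complex.imCLM.contDiff).comp (h1 0)
  have hc : ContDiff ℝ 2 (fun p : C2 × C2 => (starRingEnd ℂ) (p.1 1)) :=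
    (Complex.conjCLE.contDiff).comp (h1 1)
  unfold Delta
  exact ((hre.sub (contDiff_const.mul (him.pow 3))).mul ((h1 0).sub (h2 0))).add
    (hc.mul ((h1 1).sub (h2 1)))

lemma globalize {X Y : Type*} [NormedAddCommGroup X] [NormedSpace ℝ X] [FiniteDimensional ℝ X]
    [NormedAddCommGroup Y] [NormedSpace ℝ Y] {h : X → Y} {x0 : X} (n : ℕ)
    (hh : ContDiffAt ℝ n h x0) : ∃ g : X → Y, ContDiff ℝ n g ∧ g =ᶠ[𝓝 x0] h := by
  have hev := hh.eventually (by simp)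
  obtain ⟨r, hr, hrs⟩ := Metric.nhds_basis_closedBall.mem_iff.mp hev
  let b : ContDiffBump x0 := ⟨r / 2, r, by positivity, by linarith⟩
  refine ⟨fun x => b x • h x, ?_, ?_⟩
  · rw [contDiff_iff_contDiffAt]
    intro x
    by_cases hx : x ∈ Metric.closedBall x0 r
    · exact b.contDiffAt.smul (hrs hx)
    · have : (fun x => b x • h x) =ᶠ[𝓝 x] fun _ => 0 := by
        filter_upwards [Metric.isClosed_closedBall.isOpen_compl.mem_nhds hx] with y hy
        rw [b.zero_of_le_dist, zero_smul]
        have : ¬ dist y x0 ≤ r := hy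
        exact (not_le.mp this).le
      exact contDiffAt_const.congr_of_eventuallyEq this
  · filter_upwards [b.eventuallyEq_one] with y hy
    rw [hy]; simp

lemma chart_build (z0 : C2) (Φ : (ℝ × (ℝ × ℂ)) →L[ℝ] C2) (π : C2 →L[ℝ] (ℝ × ℂ)) (κ : C2 →L[ℝ] ℝ)
    (h1 : ∀ s x, π (Φ (s, x)) = x) (h2 : ∀ s x, κ (Φ (s, x)) = s) (h3 : ∀ w, Φ (κ w, π w) = w)
    (h : ℝ × ℂ → ℝ) (hh : ContDiffAt ℝ (2:ℕ) h (π z0))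
    (hev : ∀ᶠ w in 𝓝 z0, (w ∈ bD ↔ h (π w) = κ w)) :
    ∃ φ : ℝ × ℂ → C2, ContDiff ℝ 2 φ ∧ (∀ x, π (φ x) = x) ∧
      ∀ᶠ w in 𝓝 z0, (w ∈ bD ↔ φ (π w) = w) := by
  obtain ⟨g, hg, hgh⟩ := globalize 2 hh
  refine ⟨fun x => Φ (g x, x), Φ.contDiff.comp (hg.prodMk contDiff_id), fun x => h1 _ _, ?_⟩
  have hgh' := (π.continuous.tendsto z0).eventually hgh
  filter_upwards [hev, hgh'] with w hw hw'
  rw [hw, hw']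
  constructor
  · intro e; rw [e, h3]
  · intro e
    have := congrArg κ e
    rwa [h2] at this

lemma sq_iff {s κ E : ℝ} (hs : s ^ 2 = 1) (hk : 0 < s * κ) (hE : 0 < E) :
    κ ^ 2 = E ↔ s * Real.sqrt E = κ := by
  constructor
  · intro e
    have : (s * κ) ^ 2 = E := by rw [mul_pow, hs, e, one_mul]
    rw [← this, Real.sqrt_sq hk.le, ← mul_assoc, ← pow_two, hs, one_mul]
  · intro e
    rw [← e, mul_pow, hs, Real.sq_sqrt hE.le, one_mul]

lemma exists_sign {k : ℝ} (hk : k ≠ 0) : ∃ s : ℝ, s ^ 2 = 1 ∧ 0 < s * k := by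
  rcases lt_or_gt_of_ne hk with h | h
  · exact ⟨-1, by norm_num, by linarith⟩
  · exact ⟨1, by norm_num, by linarith⟩

def pr (i : Fin 2) : C2 →L[ℝ] ℂ :=
  (EuclideanSpace.proj (𝕜 := ℂ) i : C2 →L[ℂ] ℂ).restrictScalars ℝ

@[simp] lemma pr_apply (i : Fin 2) (w : C2) : pr i w = w i := rfl

def mk2 {X : Type*} [NormedAddCommGroup X] [NormedSpace ℝ X] (a b : X →L[ℝ] ℂ) : X →L[ℝ] C2 :=
  ((PiLp.continuousLinearEquiv 2 ℝ (fun _ : Fin 2 => ℂ)).symm : (Fin 2 → ℂ) →L[ℝ] C2) ∘L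
    (ContinuousLinearMap.pi ![a, b])

@[simp] lemma mk2_zero {X : Type*} [NormedAddCommGroup X] [NormedSpace ℝ X] (a b : X →L[ℝ] ℂ)
    (x : X) : (mk2 a b x) 0 = a x := rfl
@[simp] lemma mk2_one {X : Type*} [NormedAddCommGroup X] [NormedSpace ℝ X] (a b : X →L[ℝ] ℂ)
    (x : X) : (mk2 a b x) 1 = b x := rfl

lemma C2_ext {w z : C2} (h0 : w 0 = z 0) (h1 : w 1 = z 1) : w = z := by
  ext i; fin_cases i
  · exact h0
  · exact h1

/-- coefficients of `∂ρ` -/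
def coef (w : C2) (i : Fin 2) : ℂ :=
  if i = 0 then ((w 0).re : ℂ) - 2 * I * ((w 0).im : ℂ) ^ 3 else (starRingEnd ℂ) (w 1)

def cS : (ℝ × (ℝ × ℂ)) →L[ℝ] ℝ := ContinuousLinearMap.fst ℝ ℝ (ℝ × ℂ)
def cT : (ℝ × (ℝ × ℂ)) →L[ℝ] ℝ :=
  (ContinuousLinearMap.fst ℝ ℝ ℂ) ∘L ContinuousLinearMap.snd ℝ ℝ (ℝ × ℂ)
def cY : (ℝ × (ℝ × ℂ)) →L[ℝ] ℂ :=
  (ContinuousLinearMap.snd ℝ ℝ ℂ) ∘L ContinuousLinearMap.snd ℝ ℝ (ℝ × ℂ)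
@[simp] lemma cS_apply (s t : ℝ) (y : ℂ) : cS (s, (t, y)) = s := rfl
@[simp] lemma cT_apply (s t : ℝ) (y : ℂ) : cT (s, (t, y)) = t := rfl
@[simp] lemma cY_apply (s t : ℝ) (y : ℂ) : cY (s, (t, y)) = y := rfl

def cplx (c : ℂ) : ℝ →L[ℝ] ℂ := (ContinuousLinearMap.id ℝ ℝ).smulRight c
@[simp] lemma cplx_apply (c : ℂ) (t : ℝ) : cplx c t = t * c := by simp [cplx]
def cmul (c : ℂ) : ℂ →L[ℝ] ℂ := ContinuousLinearMap.mul ℝ ℂ c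
@[simp] lemma cmul_apply (c t : ℂ) : cmul c t = c * t := rfl

lemma chart_U (z0 : C2) (hz : z0 ∈ bD) (hu : (z0 0).re ≠ 0) :
    ∃ (φ : ℝ × ℂ → C2) (π : C2 →L[ℝ] (ℝ × ℂ)), ContDiff ℝ 2 φ ∧ (∀ x, π (φ x) = x) ∧
      (∀ᶠ w in 𝓝 z0, (w ∈ bD ↔ φ (π w) = w)) ∧ ∀ w, (π w).2 = w 1 := by
  obtain ⟨s, hs, hsk⟩ := exists_sign hu
  let π : C2 →L[ℝ] (ℝ × ℂ) := (Complex.imCLM ∘L pr 0).prod (pr 1)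
  let E : ℝ × ℂ → ℝ := fun x => 1 - x.1 ^ 4 - ‖x.2‖ ^ 2
  have hE : ContDiff ℝ (2:ℕ) E := by
    refine (contDiff_const.sub (contDiff_fst.pow 4)).sub ?_
    exact contDiff_snd.norm_sq ℝ
  have hz' : ‖z0 1‖ ^ 2 + (z0 0).re ^ 2 + (z0 0).im ^ 4 - 1 = 0 := hz
  have hE0 : 0 < E (π z0) := by
    have : E (π z0) = (z0 0).re ^ 2 := by
      change 1 - (z0 0).im ^ 4 - ‖z0 1‖ ^ 2 = _
      linarith
    rw [this]; positivity
  obtain ⟨φ, a, b, c⟩ := chart_build z0 (mk2 (cplx 1 ∘L cS + cplx I ∘L cT) cY) π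
    (Complex.reCLM ∘L pr 0) (by rintro s ⟨t, y⟩; simp [π]) (by rintro s ⟨t, y⟩; simp)
    (fun w => C2_ext (by simp [π, Complex.ext_iff]) (by simp [π]))
    (fun x => s * Real.sqrt (E x)) (contDiffAt_const.mul (hE.contDiffAt.sqrt hE0.ne'))
    (by
      have e1 : ∀ᶠ w : C2 in 𝓝 z0, 0 < E (π w) :=
        (hE.continuous.comp π.continuous).continuousAt.eventually_const_lt hE0
      have e2 : ∀ᶠ w : C2 in 𝓝 z0, 0 < s * (w 0).re := by
        have : Continuous fun w : C2 => s * (w 0).re := by fun_prop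
        exact this.continuousAt.eventually_const_lt hsk
      filter_upwards [e1, e2] with w e1 e2
      change rho w = 0 ↔ s * Real.sqrt (E (π w)) = (w 0).re
      rw [← sq_iff hs e2 e1]
      change ‖w 1‖ ^ 2 + (w 0).re ^ 2 + (w 0).im ^ 4 - 1 = 0 ↔ _ = 1 - (w 0).im ^ 4 - ‖w 1‖ ^ 2
      constructor <;> intro h <;> linarith)
  exact ⟨φ, π, a, b, c, fun w => rfl⟩

lemma chart_V (z0 : C2) (hz : z0 ∈ bD) (hu : (z0 0).im ≠ 0) :
    ∃ (φ : ℝ × ℂ → C2) (π : C2 →L[ℝ] (ℝ × ℂ)), ContDiff ℝ 2 φ ∧ (∀ x, π (φ x) = x) ∧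
      (∀ᶠ w in 𝓝 z0, (w ∈ bD ↔ φ (π w) = w)) ∧ ∀ w, (π w).2 = w 1 := by
  obtain ⟨s, hs, hsk⟩ := exists_sign hu
  let π : C2 →L[ℝ] (ℝ × ℂ) := (Complex.reCLM ∘L pr 0).prod (pr 1)
  let E : ℝ × ℂ → ℝ := fun x => 1 - x.1 ^ 2 - ‖x.2‖ ^ 2
  have hE : ContDiff ℝ (2:ℕ) E := by
    refine (contDiff_const.sub (contDiff_fst.pow 2)).sub ?_
    exact contDiff_snd.norm_sq ℝ
  have hz' : ‖z0 1‖ ^ 2 + (z0 0).re ^ 2 + (z0 0).im ^ 4 - 1 = 0 := hz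
  have hE0 : 0 < E (π z0) := by
    have : E (π z0) = (z0 0).im ^ 4 := by
      change 1 - (z0 0).re ^ 2 - ‖z0 1‖ ^ 2 = _
      linarith
    rw [this]; positivity
  obtain ⟨φ, a, b, c⟩ := chart_build z0 (mk2 (cplx I ∘L cS + cplx 1 ∘L cT) cY) π
    (Complex.imCLM ∘L pr 0) (by rintro s ⟨t, y⟩; simp [π]) (by rintro s ⟨t, y⟩; simp)
    (fun w => C2_ext (by simp [π, Complex.ext_iff]) (by simp [π]))
    (fun x => s * Real.sqrt (Real.sqrt (E x)))
    (contDiffAt_const.mul ((hE.contDiffAt.sqrt hE0.ne').sqrt (Real.sqrt_pos.mpr hE0).ne'))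
    (by
      have e1 : ∀ᶠ w : C2 in 𝓝 z0, 0 < E (π w) :=
        (hE.continuous.comp π.continuous).continuousAt.eventually_const_lt hE0
      have e2 : ∀ᶠ w : C2 in 𝓝 z0, 0 < s * (w 0).im := by
        have : Continuous fun w : C2 => s * (w 0).im := by fun_prop
        exact this.continuousAt.eventually_const_lt hsk
      filter_upwards [e1, e2] with w e1 e2
      change rho w = 0 ↔ s * Real.sqrt (Real.sqrt (E (π w))) = (w 0).im
      rw [← sq_iff hs e2 (Real.sqrt_pos.mpr e1), eq_comm (a := (w 0).im ^ 2),
        Real.sqrt_eq_iff_mul_self_eq e1.le (sq_nonneg _)]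
      change ‖w 1‖ ^ 2 + (w 0).re ^ 2 + (w 0).im ^ 4 - 1 = 0 ↔ 1 - (w 0).re ^ 2 - ‖w 1‖ ^ 2 = _
      constructor <;> intro h <;> nlinarith)
  exact ⟨φ, π, a, b, c, fun w => rfl⟩

lemma chart_W (z0 : C2) (hz : z0 ∈ bD) (hu : z0 1 ≠ 0) :
    ∃ (φ : ℝ × ℂ → C2) (π : C2 →L[ℝ] (ℝ × ℂ)), ContDiff ℝ 2 φ ∧ (∀ x, π (φ x) = x) ∧
      (∀ᶠ w in 𝓝 z0, (w ∈ bD ↔ φ (π w) = w)) ∧ ∀ w, (π w).2 = w 0 := by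
  set d : ℂ := (starRingEnd ℂ) (z0 1) / ‖z0 1‖ with hd
  have hn : (‖z0 1‖ : ℂ) ≠ 0 := by simpa using hu
  have hdn : ‖d‖ = 1 := by
    rw [hd, norm_div]; simp [hu]
  have hd0 : d ≠ 0 := by intro h; simp [h] at hdn
  have hdz : d * z0 1 = ‖z0 1‖ := by
    rw [hd, div_mul_eq_mul_div, mul_comm, Complex.mul_conj, Complex.normSq_eq_norm_sq]
    push_cast; field_simp
  have hnorm : ∀ w : ℂ, ‖w‖ ^ 2 = (d * w).re ^ 2 + (d * w).im ^ 2 := by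
    intro w
    have : ‖w‖ = ‖d * w‖ := by rw [norm_mul, hdn, one_mul]
    rw [this, ← Complex.normSq_eq_norm_sq, Complex.normSq_apply]; ring
  let π : C2 →L[ℝ] (ℝ × ℂ) := (Complex.imCLM ∘L cmul d ∘L pr 1).prod (pr 0)
  let E : ℝ × ℂ → ℝ := fun x => 1 - x.1 ^ 2 - x.2.re ^ 2 - x.2.im ^ 4
  have hE : ContDiff ℝ (2:ℕ) E := by
    have h1 : ContDiff ℝ (2:ℕ) fun x : ℝ × ℂ => x.2.re := Complex.reCLM.contDiff.comp contDiff_snd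
    have h2 : ContDiff ℝ (2:ℕ) fun x : ℝ × ℂ => x.2.im := Complex.imCLM.contDiff.comp contDiff_snd
    exact ((contDiff_const.sub (contDiff_fst.pow 2)).sub (h1.pow 2)).sub (h2.pow 4)
  have hz' : ‖z0 1‖ ^ 2 + (z0 0).re ^ 2 + (z0 0).im ^ 4 - 1 = 0 := hz
  have hpos : 0 < (d * z0 1).re := by rw [hdz]; simpa using hu
  have hE0 : 0 < E (π z0) := by
    have : E (π z0) = (d * z0 1).re ^ 2 := by
      change 1 - (d * z0 1).im ^ 2 - (z0 0).re ^ 2 - (z0 0).im ^ 4 = _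
      have := hnorm (z0 1)
      linarith
    rw [this]; positivity
  have hdi : ∀ a : ℂ, d * (d⁻¹ * a) = a := fun a => by field_simp
  have hdi' : ∀ a : ℂ, d⁻¹ * (d * a) = a := fun a => by field_simp
  obtain ⟨φ, a, b, c⟩ := chart_build z0
    (mk2 cY (cmul d⁻¹ ∘L (cplx 1 ∘L cS + cplx I ∘L cT))) π
    (Complex.reCLM ∘L cmul d ∘L pr 1) 
    (by rintro s ⟨t, y⟩; simp [π, -Complex.mul_im, -mul_inv_rev]; rw [← mul_add, hdi]; simp)
    (by rintro s ⟨t, y⟩; simp [-Complex.mul_re, -mul_inv_rev]; rw [← mul_add, hdi]; simp)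
    (fun w => C2_ext (by simp [π]) (by
      simp only [π, mk2_one]
      have : ((d * w 1).re : ℂ) * 1 + ((d * w 1).im : ℂ) * I = d * w 1 := by
        rw [mul_one, Complex.re_add_im]
      refine Eq.trans ?_ (hdi' (w 1))
      simp [-Complex.mul_im, -Complex.mul_re]
      rw [← mul_add, Complex.re_add_im]))
    (fun x => 1 * Real.sqrt (E x)) (contDiffAt_const.mul (hE.contDiffAt.sqrt hE0.ne'))
    (by
      have e1 : ∀ᶠ w : C2 in 𝓝 z0, 0 < E (π w) :=
        (hE.continuous.comp π.continuous).continuousAt.eventually_const_lt hE0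
      have e2 : ∀ᶠ w : C2 in 𝓝 z0, 0 < 1 * (d * w 1).re := by
        have : Continuous fun w : C2 => 1 * (d * w 1).re := by fun_prop
        exact this.continuousAt.eventually_const_lt (by simpa using hpos)
      filter_upwards [e1, e2] with w e1 e2
      change rho w = 0 ↔ 1 * Real.sqrt (E (π w)) = (d * w 1).re
      rw [← sq_iff (by norm_num) e2 e1]
      change ‖w 1‖ ^ 2 + (w 0).re ^ 2 + (w 0).im ^ 4 - 1 = 0 ↔
        _ = 1 - (d * w 1).im ^ 2 - (w 0).re ^ 2 - (w 0).im ^ 4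
      rw [hnorm]
      constructor <;> intro h <;> linarith)
  exact ⟨φ, π, a, b, c, fun w => rfl⟩

lemma fderiv_Delta {φ : ℝ × ℂ → C2} (hφ : ContDiff ℝ 2 φ) (z0 : C2) (x0 v : ℝ × ℂ) (h0 : φ x0 = z0) :
    fderiv ℝ (fun x => Delta (φ x) z0) x0 v =
      coef z0 0 * (fderiv ℝ φ x0 v) 0 + coef z0 1 * (fderiv ℝ φ x0 v) 1 := by
  have hd : HasFDerivAt φ (fderiv ℝ φ x0) x0 := (hφ.differentiable (by norm_num) x0).hasFDerivAt
  have hp : ∀ i, HasFDerivAt (fun x => φ x i - z0 i) (pr i ∘L fderiv ℝ φ x0) x0 := fun i =>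
    ((pr i).hasFDerivAt.comp x0 hd).sub_const _
  have hA : DifferentiableAt ℝ (fun x => (((φ x 0).re : ℝ) : ℂ) - 2 * I * (((φ x 0).im : ℝ) : ℂ) ^ 3) x0 := by
    have h1 : DifferentiableAt ℝ (fun x => (((φ x 0).re : ℝ) : ℂ)) x0 :=
      ((Complex.ofRealCLM ∘L Complex.reCLM ∘L pr 0).differentiableAt).comp x0 hd.differentiableAt
    have h2 : DifferentiableAt ℝ (fun x => (((φ x 0).im : ℝ) : ℂ)) x0 :=
      ((Complex.ofRealCLM ∘L Complex.imCLM ∘L pr 0).differentiableAt).comp x0 hd.differentiableAt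
    exact h1.sub ((h2.pow 3).const_mul _)
  have hB : DifferentiableAt ℝ (fun x => (starRingEnd ℂ) (φ x 1)) x0 :=
    (((Complex.conjCLE : ℂ →L[ℝ] ℂ) ∘L pr 1).differentiableAt).comp x0 hd.differentiableAt
  have := (hA.hasFDerivAt.mul (hp 0)).add (hB.hasFDerivAt.mul (hp 1))
  have h2 : HasFDerivAt (fun x => Delta (φ x) z0) _ x0 := this
  rw [h2.fderiv]
  simp [h0, coef]

theorem chart_exists (z0 : C2) (hz : z0 ∈ bD) :
    ∃ (φ : ℝ × ℂ → C2) (π : C2 →L[ℝ] (ℝ × ℂ)) (j : Fin 2), ContDiff ℝ 2 φ ∧ (∀ x, π (φ x) = x) ∧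
      (∀ᶠ w in 𝓝 z0, (w ∈ bD ↔ φ (π w) = w)) ∧ (∀ w, (π w).2 = w j) ∧ φ (π z0) = z0 ∧
      fderiv ℝ (fun x => Delta (φ x) z0) (π z0) (1, 0) ≠ 0 := by
  have main : ∃ (φ : ℝ × ℂ → C2) (π : C2 →L[ℝ] (ℝ × ℂ)) (j : Fin 2), ContDiff ℝ 2 φ ∧
      (∀ x, π (φ x) = x) ∧ (∀ᶠ w in 𝓝 z0, (w ∈ bD ↔ φ (π w) = w)) ∧ (∀ w, (π w).2 = w j) ∧
      coef z0 (1 - j) ≠ 0 := by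
    by_cases h1 : z0 1 = 0
    · have hz' : ‖z0 1‖ ^ 2 + (z0 0).re ^ 2 + (z0 0).im ^ 4 - 1 = 0 := hz
      have hc : (z0 0).re ≠ 0 ∨ (z0 0).im ≠ 0 → coef z0 (1 - 1) ≠ 0 := by
        intro h e
        simp only [sub_self, coef, if_true] at e
        have h3 : (((z0 0).im : ℂ) ^ 3) = (((z0 0).im ^ 3 : ℝ) : ℂ) := by push_cast; rfl
        rw [h3] at e
        have e1 := congrArg Complex.re e
        have e2 := congrArg Complex.im e
        simp [-Complex.ofReal_pow] at e1 e2
        tauto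
      by_cases h2 : (z0 0).re = 0
      · have h3 : (z0 0).im ≠ 0 := by
          intro h3; rw [h1, h2, h3] at hz'; norm_num at hz'
        obtain ⟨φ, π, a, b, c, d⟩ := chart_V z0 hz h3
        exact ⟨φ, π, 1, a, b, c, d, hc (Or.inr h3)⟩
      · obtain ⟨φ, π, a, b, c, d⟩ := chart_U z0 hz h2
        exact ⟨φ, π, 1, a, b, c, d, hc (Or.inl h2)⟩
    · obtain ⟨φ, π, a, b, c, d⟩ := chart_W z0 hz h1
      exact ⟨φ, π, 0, a, b, c, d, by simpa [coef] using h1⟩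
  obtain ⟨φ, π, j, a, b, c, d, e⟩ := main
  have h0 : φ (π z0) = z0 := (c.self_of_nhds).mp hz
  refine ⟨φ, π, j, a, b, c, d, h0, ?_⟩
  rw [fderiv_Delta a z0 _ _ h0]
  set ξ := fderiv ℝ φ (π z0) (1, 0) with hξ
  have hπξ : π ξ = (1, 0) := by
    have h1 : HasFDerivAt (fun x => π (φ x)) (π ∘L fderiv ℝ φ (π z0)) (π z0) :=
      π.hasFDerivAt.comp _ (a.differentiable (by norm_num) _).hasFDerivAt
    rw [show (fun x => π (φ x)) = fun x => x from funext b] at h1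
    have := h1.unique (hasFDerivAt_id _)
    exact congrArg (fun T => T (1, 0)) this
  have hj : ξ j = 0 := by rw [← d, hπξ]
  have hne : ξ ≠ 0 := by
    intro h; rw [h, map_zero] at hπξ
    simp [Prod.ext_iff] at hπξ
  fin_cases j
  · simp only [Fin.zero_eta] at hj e
    rw [hj]
    simp only [mul_zero, zero_add]
    exact mul_ne_zero (by simpa using e) (fun h => hne (C2_ext hj h))
  · simp only [Fin.mk_one] at hj e
    rw [hj]
    simp only [mul_zero, add_zero]
    exact mul_ne_zero (by simpa using e) (fun h => hne (C2_ext h hj))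

lemma sing_finite {E : Type*} [NormedAddCommGroup E] [NormedSpace ℝ E] [FiniteDimensional ℝ E]
    [Nontrivial E] [MeasurableSpace E] [BorelSpace E] (μ : Measure E) [μ.IsAddHaarMeasure]
    (s : ℝ) (hs : s < Module.finrank ℝ E) (hs0 : 0 < s) (r : ℝ) (hr : 0 < r) :
    ∫⁻ x in Metric.ball (0 : E) r, (‖x‖ₑ⁻¹) ^ s ∂μ ≠ ⊤ := by
  have h : IntegrableOn (fun x : E => (fun y : ℝ => y ^ (-s)) ‖x‖) (Metric.ball 0 r) μ := by
    refine (integrableOn_fun_norm_addHaar μ (f := fun y : ℝ => y ^ (-s))).mpr ?_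
    have h1 : IntegrableOn (fun y : ℝ => y ^ ((Module.finrank ℝ E : ℝ) - 1 - s)) (Ioo 0 r) := by
      rw [intervalIntegral.integrableOn_Ioo_rpow_iff hr]
      linarith
    refine h1.congr_fun ?_ measurableSet_Ioo
    intro y hy
    have hpos : 0 < Module.finrank ℝ E := Module.finrank_pos
    simp only [smul_eq_mul]
    rw [← Real.rpow_natCast, ← Real.rpow_add hy.1, Nat.cast_sub hpos]
    congr 1
    push_cast; ring
  have h2 := h.hasFiniteIntegral
  rw [HasFiniteIntegral] at h2
  refine (lt_of_le_of_lt (lintegral_mono_ae ?_) h2).ne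
  have hz : ∀ᵐ x ∂(μ.restrict (Metric.ball (0:E) r)), x ≠ 0 := by
    refine ae_restrict_of_ae ?_
    simp [ae_iff]
  filter_upwards [hz] with x hx
  have hp : 0 < ‖x‖ := norm_pos_iff.mpr hx
  rw [Real.enorm_eq_ofReal (by positivity), ← ofReal_norm, Real.rpow_neg hp.le,
    ← ENNReal.ofReal_inv_of_pos hp, ENNReal.ofReal_rpow_of_nonneg (by positivity) hs0.le,
    Real.inv_rpow hp.le]

lemma sing_shift {E : Type*} [NormedAddCommGroup E] [NormedSpace ℝ E] [FiniteDimensional ℝ E]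
    [MeasurableSpace E] [BorelSpace E] (μ : Measure E) [μ.IsAddHaarMeasure]
    (s : ℝ) (r : ℝ) (hr : 0 < r) (a τ : E) (hτ : τ ∈ Metric.closedBall a r) :
    ∫⁻ x in Metric.closedBall a r, (‖x - τ‖ₑ⁻¹) ^ s ∂μ ≤
      ∫⁻ x in Metric.ball (0 : E) (3 * r), (‖x‖ₑ⁻¹) ^ s ∂μ := by
  rw [← lintegral_indicator Metric.isClosed_closedBall.measurableSet,
    ← lintegral_indicator Metric.isOpen_ball.measurableSet]
  conv_rhs => rw [← lintegral_sub_right_eq_self (μ := μ) _ τ]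
  refine lintegral_mono fun x => ?_
  by_cases hx : x ∈ Metric.closedBall a r
  · have : x - τ ∈ Metric.ball (0:E) (3 * r) := by
      rw [mem_ball_zero_iff, ← dist_eq_norm]
      have := dist_triangle_right x τ a
      rw [Metric.mem_closedBall] at hx hτ
      linarith
    rw [indicator_of_mem hx, indicator_of_mem this]
  · rw [indicator_of_notMem hx]; exact zero_le

lemma sing_main (r m : ℝ) (hr : 0 < r) (hm : 0 < m) : ∃ C : ENNReal, C ≠ ⊤ ∧
    ∀ (a : ℝ) (b ζ : ℂ) (q : ℝ × ℂ → ℂ), Continuous q → ζ ∈ Metric.closedBall b r →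
    (∀ y ∈ Metric.closedBall b r, ∀ t ∈ Metric.closedBall a r, ∀ t' ∈ Metric.closedBall a r,
      m * |t - t'| ≤ ‖q (t, y) - q (t', y)‖) →
    (∀ y ∈ Metric.closedBall b r, ∀ t ∈ Metric.closedBall a r, ‖y - ζ‖ ^ 4 / 16 ≤ ‖q (t, y)‖) →
    ∫⁻ x in Metric.closedBall (a, b) r, (‖q x‖ₑ⁻¹) ^ (9/8 : ℝ) ≤ C := by
  have f1 := sing_finite (volume : Measure ℝ) (3/4) (by simp; norm_num) (by norm_num) (3 * r)
    (by positivity)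
  have f2 := sing_finite (volume : Measure ℂ) (3/2) (by simp [Complex.finrank_real_complex]; norm_num) (by norm_num) (3 * r)
    (by positivity)
  set L1 := ∫⁻ x in Metric.ball (0 : ℝ) (3 * r), (‖x‖ₑ⁻¹) ^ (3/4 : ℝ)
  set L2 := ∫⁻ x in Metric.ball (0 : ℂ) (3 * r), (‖x‖ₑ⁻¹) ^ (3/2 : ℝ)
  set c1 : ENNReal := (ENNReal.ofReal (2 / m)) ^ (3/4 : ℝ)
  set c2 : ENNReal := (ENNReal.ofReal 16) ^ (3/8 : ℝ)
  have hc1 : c1 ≠ ⊤ := ENNReal.rpow_ne_top_of_nonneg (by norm_num) ENNReal.ofReal_ne_top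
  have hc2 : c2 ≠ ⊤ := ENNReal.rpow_ne_top_of_nonneg (by norm_num) ENNReal.ofReal_ne_top
  refine ⟨(c1 * c2 * L1) * L2, ENNReal.mul_ne_top (ENNReal.mul_ne_top (ENNReal.mul_ne_top hc1 hc2) f1) f2, ?_⟩
  intro a b ζ q hq hζ h1 h2
  rw [← closedBall_prod_same, Measure.volume_eq_prod, ← Measure.prod_restrict,
    lintegral_prod_symm _ (by fun_prop)]
  have key : ∀ y ∈ Metric.closedBall b r,
      ∫⁻ t in Metric.closedBall a r, (‖q (t, y)‖ₑ⁻¹) ^ (9/8 : ℝ) ≤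
        (c1 * c2 * L1) * (‖y - ζ‖ₑ⁻¹) ^ (3/2 : ℝ) := by
    intro y hy
    obtain ⟨τ, hτ, hmin⟩ := (isCompact_closedBall a r).exists_isMinOn
      (Metric.nonempty_closedBall.mpr hr.le)
      (f := fun t => ‖q (t, y)‖) (by fun_prop)
    have hpt : ∀ t ∈ Metric.closedBall a r, (‖q (t, y)‖ₑ⁻¹) ^ (9/8 : ℝ) ≤
        (c1 * c2 * (‖y - ζ‖ₑ⁻¹) ^ (3/2 : ℝ)) * (‖t - τ‖ₑ⁻¹) ^ (3/4 : ℝ) := by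
      intro t ht
      have b1 : ‖q (t, y)‖ₑ⁻¹ ≤ ENNReal.ofReal (2 / m) * ‖t - τ‖ₑ⁻¹ := by
        rw [show (2 / m) = (m / 2)⁻¹ by rw [inv_div], ENNReal.ofReal_inv_of_pos (by positivity),
          ← ENNReal.mul_inv (Or.inr (by simp)) (Or.inl ENNReal.ofReal_ne_top)]
        rw [ENNReal.inv_le_inv, ← ofReal_norm, ← ofReal_norm, ← ENNReal.ofReal_mul (by positivity)]
        apply ENNReal.ofReal_le_ofReal
        have e1 := h1 y hy t ht τ hτ
        have e2 : ‖q (τ, y)‖ ≤ ‖q (t, y)‖ := hmin ht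
        have e3 := norm_sub_le (q (t, y)) (q (τ, y))
        rw [Real.norm_eq_abs]
        linarith
      have b2 : ‖q (t, y)‖ₑ⁻¹ ≤ ENNReal.ofReal 16 * (‖y - ζ‖ₑ⁻¹) ^ (4 : ℝ) := by
        rw [show (16 : ℝ) = (1 / 16)⁻¹ by norm_num, ENNReal.ofReal_inv_of_pos (by norm_num),
          ENNReal.inv_rpow, ← ENNReal.mul_inv (Or.inr (by simp)) (Or.inl ENNReal.ofReal_ne_top)]
        rw [ENNReal.inv_le_inv, ← ofReal_norm, ← ofReal_norm,
          ENNReal.ofReal_rpow_of_nonneg (by positivity) (by norm_num),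
          ← ENNReal.ofReal_mul (by positivity)]
        apply ENNReal.ofReal_le_ofReal
        have e1 := h2 y hy t ht
        have : ‖y - ζ‖ ^ (4 : ℝ) = ‖y - ζ‖ ^ 4 := by norm_cast
        rw [this]; linarith
      rw [show (9/8 : ℝ) = 3/4 + 3/8 by norm_num,
        ENNReal.rpow_add_of_nonneg _ _ (by norm_num) (by norm_num)]
      have b1' := ENNReal.rpow_le_rpow b1 (show (0:ℝ) ≤ 3/4 by norm_num)
      have b2' := ENNReal.rpow_le_rpow b2 (show (0:ℝ) ≤ 3/8 by norm_num)
      rw [ENNReal.mul_rpow_of_nonneg _ _ (by norm_num)] at b1' b2'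
      rw [← ENNReal.rpow_mul, show (4 * (3/8) : ℝ) = 3/2 by norm_num] at b2'
      refine (mul_le_mul' b1' b2').trans (le_of_eq ?_)
      simp only [c1, c2]; ring
    calc _ ≤ ∫⁻ t in Metric.closedBall a r,
          (c1 * c2 * (‖y - ζ‖ₑ⁻¹) ^ (3/2 : ℝ)) * (‖t - τ‖ₑ⁻¹) ^ (3/4 : ℝ) :=
          setLIntegral_mono' Metric.isClosed_closedBall.measurableSet hpt
      _ = (c1 * c2 * (‖y - ζ‖ₑ⁻¹) ^ (3/2 : ℝ)) *
          ∫⁻ t in Metric.closedBall a r, (‖t - τ‖ₑ⁻¹) ^ (3/4 : ℝ) :=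
          lintegral_const_mul _ (by fun_prop)
      _ ≤ (c1 * c2 * (‖y - ζ‖ₑ⁻¹) ^ (3/2 : ℝ)) * L1 := by
          gcongr; exact sing_shift _ _ r hr a τ hτ
      _ = _ := by ring
  calc _ ≤ ∫⁻ y in Metric.closedBall b r, (c1 * c2 * L1) * (‖y - ζ‖ₑ⁻¹) ^ (3/2 : ℝ) :=
        setLIntegral_mono' Metric.isClosed_closedBall.measurableSet key
    _ = (c1 * c2 * L1) * ∫⁻ y in Metric.closedBall b r, (‖y - ζ‖ₑ⁻¹) ^ (3/2 : ℝ) :=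
        lintegral_const_mul _ (by fun_prop)
    _ ≤ _ := by gcongr; exact sing_shift _ _ r hr b ζ hζ

def Psi (η : ℝ) (ζ : ℂ) : ℂ := (starRingEnd ℂ) ζ / (((max ‖ζ‖ η) ^ 2 : ℝ) : ℂ)

lemma continuous_Psi {η : ℝ} (hη : 0 < η) : Continuous (Psi η) := by
  unfold Psi
  refine Continuous.div Complex.continuous_conj (by fun_prop) fun ζ => ?_
  have : 0 < max ‖ζ‖ η := lt_max_of_lt_right hη
  exact_mod_cast (by positivity : (max ‖ζ‖ η) ^ 2 ≠ 0)

lemma Psi_bound {η : ℝ} (hη : 0 < η) (ζ : ℂ) :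
    ‖ζ⁻¹ - Psi η ζ‖ₑ ≤ ENNReal.ofReal (η ^ (1/8 : ℝ)) * (‖ζ‖ₑ⁻¹) ^ (9/8 : ℝ) := by
  by_cases hz : ζ = 0
  · subst hz; simp [Psi]
  have hp : 0 < ‖ζ‖ := norm_pos_iff.mpr hz
  have hinv : ζ⁻¹ = (starRingEnd ℂ) ζ * ((‖ζ‖ ^ 2)⁻¹ : ℝ) := by
    rw [Complex.inv_def, Complex.normSq_eq_norm_sq]
  by_cases h : η ≤ ‖ζ‖
  · have : ζ⁻¹ - Psi η ζ = 0 := by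
      rw [Psi, max_eq_left h, hinv]; push_cast; rw [div_eq_mul_inv, sub_self]
    rw [this]; simp
  · push Not at h
    rw [← ofReal_norm, ← ofReal_norm, ← ENNReal.ofReal_inv_of_pos hp,
      ENNReal.ofReal_rpow_of_nonneg (by positivity) (by norm_num), ← ENNReal.ofReal_mul (by positivity)]
    apply ENNReal.ofReal_le_ofReal
    have e : ζ⁻¹ - Psi η ζ = (starRingEnd ℂ) ζ * (((‖ζ‖ ^ 2)⁻¹ - (η ^ 2)⁻¹ : ℝ) : ℂ) := by
      rw [Psi, max_eq_right h.le, hinv]; push_cast; ring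
    have h1 : (η ^ 2)⁻¹ ≤ (‖ζ‖ ^ 2)⁻¹ := by gcongr
    have h2 : 0 ≤ (η ^ 2)⁻¹ := by positivity
    rw [e, norm_mul, Complex.norm_conj, Complex.norm_real, Real.norm_of_nonneg (by linarith)]
    calc ‖ζ‖ * ((‖ζ‖ ^ 2)⁻¹ - (η ^ 2)⁻¹) ≤ ‖ζ‖ * (‖ζ‖ ^ 2)⁻¹ := by gcongr; linarith
      _ = ‖ζ‖⁻¹ := by field_simp
      _ = ‖ζ‖ ^ (1/8 : ℝ) * ‖ζ‖⁻¹ ^ (9/8 : ℝ) := by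
          rw [Real.inv_rpow hp.le, ← Real.rpow_neg hp.le, ← Real.rpow_add hp, ← Real.rpow_neg_one]
          norm_num
      _ ≤ _ := by gcongr

/-- continuity of the weakly singular integral -/
lemma sing_cont (S : Set C2) (x0 : ℝ × ℂ) (r m : ℝ) (hr : 0 < r) (hm : 0 < m)
    (q k : ℝ × ℂ → C2 → ℂ) (hS : ∃ Q : Set C2, IsCompact Q ∧ S ⊆ Q)
    (hq : Continuous fun p : (ℝ × ℂ) × C2 => q p.1 p.2)
    (hk : Continuous fun p : (ℝ × ℂ) × C2 => k p.1 p.2) (j : Fin 2)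
    (hz : ∀ z ∈ S, z j ∈ Metric.closedBall x0.2 r)
    (h1 : ∀ z ∈ S, ∀ y ∈ Metric.closedBall x0.2 r, ∀ t ∈ Metric.closedBall x0.1 r,
      ∀ t' ∈ Metric.closedBall x0.1 r, m * |t - t'| ≤ ‖q (t, y) z - q (t', y) z‖)
    (h2 : ∀ z ∈ S, ∀ y ∈ Metric.closedBall x0.2 r, ∀ t ∈ Metric.closedBall x0.1 r,
      ‖y - z j‖ ^ 4 / 16 ≤ ‖q (t, y) z‖) :
    ContinuousOn (fun z => ∫ x in Metric.closedBall x0 r, k x z * (q x z)⁻¹) S := by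
  obtain ⟨C, hC, hmain⟩ := sing_main r m hr hm
  obtain ⟨Q, hQ, hSQ⟩ := hS
  obtain ⟨B, hB⟩ := ((isCompact_closedBall x0 r).prod hQ).exists_bound_of_continuousOn hk.continuousOn
  have hB0 : 0 ≤ |B| := abs_nonneg B
  have hqz : ∀ z, Continuous fun x => q x z := fun z =>
    hq.comp (continuous_id.prodMk continuous_const)
  have hkz : ∀ z, Continuous fun x => k x z := fun z =>
    hk.comp (continuous_id.prodMk continuous_const)
  have hb : ∀ z ∈ S, ∀ η : ℝ, 0 < η → ∫⁻ x in Metric.closedBall x0 r,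
      ‖k x z * (q x z)⁻¹ - k x z * Psi η (q x z)‖ₑ ≤
        ENNReal.ofReal |B| * ENNReal.ofReal (η ^ (1/8 : ℝ)) * C := by
    intro z hzS η hη
    calc _ ≤ ∫⁻ x in Metric.closedBall x0 r, (ENNReal.ofReal |B| * ENNReal.ofReal (η ^ (1/8 : ℝ))) *
            (‖q x z‖ₑ⁻¹) ^ (9/8 : ℝ) := by
          refine setLIntegral_mono' Metric.isClosed_closedBall.measurableSet fun x hx => ?_
          rw [← mul_sub, enorm_mul, mul_assoc]
          refine mul_le_mul' ?_ (Psi_bound hη _)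
          rw [← ofReal_norm]
          exact ENNReal.ofReal_le_ofReal ((hB (x, z) ⟨hx, hSQ hzS⟩).trans (le_abs_self B))
      _ = (ENNReal.ofReal |B| * ENNReal.ofReal (η ^ (1/8 : ℝ))) *
          ∫⁻ x in Metric.closedBall x0 r, (‖q x z‖ₑ⁻¹) ^ (9/8 : ℝ) := by
          have hm1 : Measurable fun x => (‖q x z‖ₑ⁻¹) ^ (9/8 : ℝ) :=
            ((hqz z).measurable.enorm.inv).pow_const _
          exact lintegral_const_mul _ hm1
      _ ≤ _ := by
          gcongr
          exact hmain x0.1 x0.2 (z j) (fun x => q x z) (hqz z) (hz z hzS) (h1 z hzS) (h2 z hzS)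
  have hiΨ : ∀ z, ∀ η : ℝ, 0 < η →
      IntegrableOn (fun x => k x z * Psi η (q x z)) (Metric.closedBall x0 r) := fun z η hη =>
    ((hkz z).mul ((continuous_Psi hη).comp (hqz z))).continuousOn.integrableOn_compact
      (isCompact_closedBall x0 r)
  have hid : ∀ z ∈ S, ∀ η : ℝ, 0 < η → IntegrableOn
      (fun x => k x z * (q x z)⁻¹ - k x z * Psi η (q x z)) (Metric.closedBall x0 r) := by
    intro z hzS η hη
    refine ⟨?_, lt_of_le_of_lt (hb z hzS η hη) ?_⟩
    · have a1 := (hkz z).measurable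
      have a2 := (hqz z).measurable
      have a3 := ((continuous_Psi hη).comp (hqz z)).measurable
      exact ((a1.mul a2.inv).sub (a1.mul a3)).aestronglyMeasurable
    · exact ENNReal.mul_lt_top (ENNReal.mul_lt_top ENNReal.ofReal_lt_top ENNReal.ofReal_lt_top)
        hC.lt_top
  have hi : ∀ z ∈ S, IntegrableOn (fun x => k x z * (q x z)⁻¹) (Metric.closedBall x0 r) := by
    intro z hzS
    have := (hid z hzS 1 one_pos).add (hiΨ z 1 one_pos)
    refine this.congr (Eventually.of_forall fun x => ?_)
    simp
  refine continuousOn_of_uniform_approx_of_continuousOn fun u hu => ?_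
  obtain ⟨ε, hε, hεu⟩ := Metric.mem_uniformity_dist.mp hu
  have hlim : Tendsto (fun η : ℝ => |B| * η ^ (1/8 : ℝ) * C.toReal) (𝓝[>] 0) (𝓝 0) := by
    have : Continuous fun η : ℝ => |B| * η ^ (1/8 : ℝ) * C.toReal :=
      (continuous_const.mul (Real.continuous_rpow_const (by norm_num))).mul continuous_const
    have h := this.tendsto 0
    rw [Real.zero_rpow (by norm_num), mul_zero, zero_mul] at h
    exact h.mono_left nhdsWithin_le_nhds
  obtain ⟨η, hη1, hη⟩ := ((hlim.eventually (gt_mem_nhds hε)).and self_mem_nhdsWithin).exists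
  refine ⟨fun z => ∫ x in Metric.closedBall x0 r, k x z * Psi η (q x z), ?_, ?_⟩
  · refine (continuous_parametric_integral_of_continuous
      (f := fun z x => k x z * Psi η (q x z)) ?_ (isCompact_closedBall x0 r)).continuousOn
    have := (hk.mul ((continuous_Psi hη).comp hq)).comp (continuous_swap (X := C2) (Y := ℝ × ℂ))
    exact this
  · intro z hzS
    apply hεu
    rw [dist_eq_norm, ← integral_sub (hi z hzS) (hiΨ z η hη)]
    refine lt_of_le_of_lt ?_ hη1
    refine (norm_integral_le_lintegral_norm _).trans ?_
    have e := hb z hzS η hη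
    simp_rw [ofReal_norm]
    refine (ENNReal.toReal_mono ?_ e).trans (le_of_eq ?_)
    · exact ENNReal.mul_ne_top (ENNReal.mul_ne_top ENNReal.ofReal_ne_top ENNReal.ofReal_ne_top) hC
    · rw [ENNReal.toReal_mul, ENNReal.toReal_mul, ENNReal.toReal_ofReal hB0,
        ENNReal.toReal_ofReal (by positivity)]

/-- integration by parts -/
lemma by_parts (x0 : ℝ × ℂ) (r : ℝ) (P q g : ℝ × ℂ → ℂ)
    (hP : ContDiff ℝ 1 P) (hq : ContDiff ℝ 1 q) (hP0 : ∀ x ∉ Metric.closedBall x0 r, P x = 0)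
    (hg0 : ∀ x ∉ Metric.closedBall x0 r, g x = 0)
    (hqn : ∀ x ∈ Metric.closedBall x0 r, q x ≠ 0)
    (hg : ∀ x ∈ Metric.closedBall x0 r, g x = P x * fderiv ℝ q x (1, 0)) :
    ∫ x, g x / q x ^ 2 = ∫ x in Metric.closedBall x0 r, fderiv ℝ P x (1, 0) * (q x)⁻¹ := by
  set H : ℝ × ℂ → ℂ := fun x => P x * (q x)⁻¹ with hH
  have hout : ∀ x ∉ Metric.closedBall x0 r, H =ᶠ[𝓝 x] fun _ => 0 := by
    intro x hx
    filter_upwards [Metric.isClosed_closedBall.isOpen_compl.mem_nhds hx] with y hy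
    simp [hH, hP0 y hy]
  have hHC : ContDiff ℝ 1 H := by
    rw [contDiff_iff_contDiffAt]
    intro x
    by_cases hx : x ∈ Metric.closedBall x0 r
    · exact hP.contDiffAt.mul (hq.contDiffAt.inv (hqn x hx))
    · exact contDiffAt_const.congr_of_eventuallyEq (hout x hx)
  have hsupp : HasCompactSupport H := by
    refine HasCompactSupport.intro (isCompact_closedBall x0 r) fun x hx => ?_
    exact (hout x hx).self_of_nhds
  have hH'c : Continuous fun x => fderiv ℝ H x (1, 0) :=
    (hHC.continuous_fderiv (by norm_num)).clm_apply continuous_const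
  have hH's : HasCompactSupport fun x => fderiv ℝ H x (1, 0) :=
    HasCompactSupport.intro (isCompact_closedBall x0 r) fun x hx => by
      rw [(hout x hx).fderiv_eq]; simp
  have hint : Integrable fun x => fderiv ℝ H x (1, 0) :=
    hH'c.integrable_of_hasCompactSupport hH's
  have hzero : ∫ x, fderiv ℝ H x (1, 0) = 0 := by
    have := integral_mul_fderiv_eq_neg_fderiv_mul_of_integrable (μ := (volume : Measure (ℝ × ℂ)))
      (f := fun _ => (1:ℂ)) (g := H) (v := (1, 0)) (by simp) (by simpa using hint)
      (by simpa using hHC.continuous.integrable_of_hasCompactSupport hsupp)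
      (fun x _ => differentiableAt_const _) (fun x _ => hHC.differentiable (by norm_num) x)
    simpa using this
  have hformula : ∀ x ∈ Metric.closedBall x0 r, fderiv ℝ H x (1, 0) =
      fderiv ℝ P x (1, 0) * (q x)⁻¹ - g x / q x ^ 2 := by
    intro x hx
    have d1 := (hP.differentiable (by norm_num) x).hasFDerivAt
    have d2 := (hq.differentiable (by norm_num) x).hasFDerivAt
    have d3 : HasFDerivAt (fun x => (q x)⁻¹) _ x := 
      (hasDerivAt_inv (hqn x hx)).comp_hasFDerivAt x d2
    have d4 : HasFDerivAt H _ x := d1.mul d3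
    rw [d4.fderiv, hg x hx]
    have := hqn x hx
    simp
    field_simp
    ring
  have e1 : ∫ x, g x / q x ^ 2 = ∫ x in Metric.closedBall x0 r, g x / q x ^ 2 := by
    refine (setIntegral_eq_integral_of_forall_compl_eq_zero fun x hx => ?_).symm
    rw [hg0 x hx, zero_div]
  have e2 : ∫ x, fderiv ℝ H x (1, 0) = ∫ x in Metric.closedBall x0 r, fderiv ℝ H x (1, 0) := by
    refine (setIntegral_eq_integral_of_forall_compl_eq_zero fun x hx => ?_).symm
    rw [(hout x hx).fderiv_eq]; simp
  have i1 : IntegrableOn (fun x => fderiv ℝ P x (1, 0) * (q x)⁻¹) (Metric.closedBall x0 r) := by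
    refine ContinuousOn.integrableOn_compact (isCompact_closedBall x0 r) ?_
    exact ((hP.continuous_fderiv (by norm_num)).clm_apply continuous_const).continuousOn.mul
      (hq.continuous.continuousOn.inv₀ hqn)
  have e3 : ∫ x in Metric.closedBall x0 r, g x / q x ^ 2 = ∫ x in Metric.closedBall x0 r,
      (fderiv ℝ P x (1, 0) * (q x)⁻¹ - fderiv ℝ H x (1, 0)) := by
    refine setIntegral_congr_fun Metric.isClosed_closedBall.measurableSet fun x hx => ?_
    simp only [hformula x hx]; ring
  rw [e1, e3, integral_sub i1 hint.integrableOn, ← e2, hzero, sub_zero]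

theorem local_limit (q : ℝ × ℂ → C2 → ℂ)
    (hq : ContDiff ℝ 2 (fun p : (ℝ × ℂ) × C2 => q p.1 p.2)) (x0 : ℝ × ℂ) (z0 : C2) (j : Fin 2)
    (hxz : z0 j = x0.2) (hz0 : rho z0 ≤ 0) (hM : fderiv ℝ (fun x => q x z0) x0 (1, 0) ≠ 0)
    (R0 : ℝ) (hR0 : 0 < R0) (hl1 : ∀ z ∈ D, ∀ x ∈ Metric.closedBall x0 R0, q x z ≠ 0)
    (hl2 : ∀ z, rho z ≤ 0 → ∀ x ∈ Metric.closedBall x0 R0, ‖x.2 - z j‖ ^ 4 / 16 ≤ ‖q x z‖) :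
    ∃ r > 0, ∀ g : ℝ × ℂ → ℂ, ContDiff ℝ 1 g → (∀ x ∉ Metric.closedBall x0 r, g x = 0) →
      ∃ l, Tendsto (fun z => ∫ x, g x / (q x z) ^ 2) (𝓝[D] z0) (𝓝 l) := by
  set M : (ℝ × ℂ) × C2 → ℂ := fun p => fderiv ℝ (fun x => q x p.2) p.1 (1, 0) with hMdef
  have hMC : ContDiff ℝ 1 M := by
    have h1 : ContDiff ℝ 2 (Function.uncurry (fun (p : (ℝ × ℂ) × C2) (x : ℝ × ℂ) => q x p.2)) :=
      hq.comp (contDiff_snd.prodMk (contDiff_snd.comp contDiff_fst))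
    have h2 := ContDiff.fderiv (n := 1) h1 contDiff_fst (by norm_num)
    exact h2.clm_apply contDiff_const
  set M0 := M (x0, z0) with hM0
  have hM0n : 0 < ‖M0‖ := norm_pos_iff.mpr hM
  obtain ⟨inv, hinvC, hinv⟩ := globalize (h := fun ζ : ℂ => ζ⁻¹) (x0 := M0) 1
    (contDiffAt_id.inv hM)
  have hMcont : Tendsto M (𝓝 (x0, z0)) (𝓝 M0) := hMC.continuous.tendsto _
  have hev : ∀ᶠ p in 𝓝 (x0, z0), inv (M p) = (M p)⁻¹ ∧ ‖M p - M0‖ < ‖M0‖ / 2 := by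
    filter_upwards [hMcont.eventually hinv,
      hMcont.eventually (Metric.ball_mem_nhds M0 (half_pos hM0n))] with p hp1 hp2
    exact ⟨hp1, mem_ball_iff_norm.mp hp2⟩
  obtain ⟨r1, hr1, hr1s⟩ := Metric.nhds_basis_closedBall.mem_iff.mp hev
  set r := min r1 R0 with hrdef
  have hr : 0 < r := lt_min hr1 hR0
  have hsub : Metric.closedBall x0 r ⊆ Metric.closedBall x0 R0 :=
    Metric.closedBall_subset_closedBall (min_le_right _ _)
  have hP : ∀ x ∈ Metric.closedBall x0 r, ∀ z ∈ Metric.closedBall z0 r,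
      inv (M (x, z)) = (M (x, z))⁻¹ ∧ ‖M (x, z) - M0‖ < ‖M0‖ / 2 := by
    intro x hx z hz
    have : (x, z) ∈ Metric.closedBall (x0, z0) r1 := by
      rw [← closedBall_prod_same]
      exact ⟨Metric.closedBall_subset_closedBall (min_le_left _ _) hx,
        Metric.closedBall_subset_closedBall (min_le_left _ _) hz⟩
    exact hr1s this
  refine ⟨r, hr, fun g hg hg0 => ?_⟩
  set P : ℝ × ℂ → C2 → ℂ := fun x z => g x * inv (M (x, z)) with hPdef
  have hPC : ContDiff ℝ 1 (fun p : (ℝ × ℂ) × C2 => P p.1 p.2) :=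
    (hg.comp contDiff_fst).mul (hinvC.comp hMC)
  set k : ℝ × ℂ → C2 → ℂ := fun x z => fderiv ℝ (fun x => P x z) x (1, 0) with hkdef
  have hkC : Continuous (fun p : (ℝ × ℂ) × C2 => k p.1 p.2) := by
    have h1 : ContDiff ℝ 1 (Function.uncurry (fun (p : (ℝ × ℂ) × C2) (x : ℝ × ℂ) => P x p.2)) :=
      hPC.comp (contDiff_snd.prodMk (contDiff_snd.comp contDiff_fst))
    have h2 := ContDiff.fderiv (n := 0) h1 contDiff_fst (by norm_num)
    exact (h2.clm_apply contDiff_const).continuous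
  have hqz : ∀ z, ContDiff ℝ 2 fun x => q x z := fun z =>
    hq.comp (contDiff_id.prodMk contDiff_const)
  have hmem : ∀ t ∈ Metric.closedBall x0.1 r, ∀ y ∈ Metric.closedBall x0.2 r,
      ((t, y) : ℝ × ℂ) ∈ Metric.closedBall x0 r := by
    intro t ht y hy
    rw [← Prod.mk.eta (p := x0), ← closedBall_prod_same]
    exact ⟨ht, hy⟩
  set S : Set C2 := Metric.closedBall z0 r ∩ {z | rho z ≤ 0} with hS
  have hc := sing_cont S x0 r (‖M0‖ / 2) hr (half_pos hM0n) q k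
    ⟨Metric.closedBall z0 r, isCompact_closedBall _ _, inter_subset_left⟩ hq.continuous hkC j
    (by
      rintro z ⟨hz, -⟩
      rw [← hxz, mem_closedBall_iff_norm]
      rw [mem_closedBall_iff_norm] at hz
      exact (PiLp.norm_apply_le (z - z0) j).trans hz)
    (by
      rintro z ⟨hz, -⟩ y hy t ht t' ht'
      have hd : ∀ s ∈ Metric.closedBall x0.1 r, HasDerivWithinAt
          (fun s : ℝ => q (s, y) z - (s : ℂ) * M0) (M ((s, y), z) - M0)
            (Metric.closedBall x0.1 r) s := by
        intro s _
        have d1 : HasFDerivAt (fun x => q x z) (fderiv ℝ (fun x => q x z) (s, y)) (s, y) :=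
          ((hqz z).differentiable (by norm_num) _).hasFDerivAt
        have d2 : HasDerivAt (fun s : ℝ => ((s, y) : ℝ × ℂ)) (1, 0) s :=
          (hasDerivAt_id s).prodMk (hasDerivAt_const s y)
        have d3 : HasDerivAt (fun s : ℝ => q (s, y) z) (M ((s, y), z)) s :=
          HasFDerivAt.comp_hasDerivAt (l := fun x => q x z) s d1 d2
        have d4 : HasDerivAt (fun s : ℝ => (s : ℂ) * M0) M0 s := by
          simpa using (Complex.ofRealCLM.hasDerivAt (x := s)).mul_const M0
        exact (d3.sub d4).hasDerivWithinAt
      have hmv := (convex_closedBall x0.1 r).norm_image_sub_le_of_norm_hasDerivWithin_le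
        hd (fun s hs => (hP (s, y) (hmem s hs y hy) z hz).2.le) ht' ht
      have e : (t - t' : ℂ) * M0 = (q (t, y) z - q (t', y) z) -
          (q (t, y) z - (t : ℂ) * M0 - (q (t', y) z - (t' : ℂ) * M0)) := by ring
      have e2 : ‖(t - t' : ℂ) * M0‖ = |t - t'| * ‖M0‖ := by
        rw [norm_mul, ← Complex.ofReal_sub, Complex.norm_real, Real.norm_eq_abs]
      have e3 := norm_sub_le (q (t, y) z - q (t', y) z)
          (q (t, y) z - (t : ℂ) * M0 - (q (t', y) z - (t' : ℂ) * M0))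
      rw [← e, e2] at e3
      rw [Real.norm_eq_abs] at hmv
      linarith)
    (by
      rintro z ⟨-, hz⟩ y hy t ht
      exact hl2 z hz (t, y) (hsub (hmem t ht y hy)))
  refine ⟨∫ x in Metric.closedBall x0 r, k x z0 * (q x z0)⁻¹, ?_⟩
  have hz0S : z0 ∈ S := ⟨Metric.mem_closedBall_self hr.le, hz0⟩
  have hlim := hc z0 hz0S
  have hle : 𝓝[D] z0 ≤ 𝓝[S] z0 := by
    refine le_inf inf_le_left ?_
    rw [le_principal_iff]
    filter_upwards [self_mem_nhdsWithin, nhdsWithin_le_nhds (Metric.closedBall_mem_nhds z0 hr)]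
      with z h1 h2
    exact ⟨h2, (show rho z < 0 from h1).le⟩
  have hlim' := hlim.tendsto.mono_left hle
  refine hlim'.congr' ?_
  filter_upwards [self_mem_nhdsWithin, nhdsWithin_le_nhds (Metric.closedBall_mem_nhds z0 hr)]
    with z h1 h2
  refine (by_parts x0 r (fun x => P x z) (fun x => q x z) g
    (hPC.comp (contDiff_id.prodMk contDiff_const)) ((hqz z).of_le (by norm_num)) ?_ hg0 ?_ ?_).symm
  · intro x hx; simp [hPdef, hg0 x hx]
  · intro x hx; exact hl1 z h1 x (hsub hx)
  · intro x hx
    obtain ⟨e1, e2⟩ := hP x hx z h2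
    have hne : M (x, z) ≠ 0 := by
      intro h; rw [h, zero_sub, norm_neg] at e2; linarith
    change g x = g x * inv (M (x, z)) * M (x, z)
    rw [e1, mul_assoc, inv_mul_cancel₀ hne, mul_one]

lemma norm_sq_C2 (v : C2) : ‖v‖ ^ 2 = ‖v 0‖ ^ 2 + ‖v 1‖ ^ 2 := by
  rw [EuclideanSpace.norm_sq_eq]; simp

lemma norm_le_C2 (v : C2) : ‖v‖ ≤ ‖v 0‖ + ‖v 1‖ := by
  have := norm_sq_C2 v
  nlinarith [norm_nonneg (v 0), norm_nonneg (v 1), norm_nonneg v,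
    mul_nonneg (norm_nonneg (v 0)) (norm_nonneg (v 1))]

lemma isClosed_bD : IsClosed bD := isClosed_eq continuous_rho continuous_const

lemma isCompact_bD : IsCompact bD := by
  refine Metric.isCompact_of_isClosed_isBounded isClosed_bD ?_
  refine (Metric.isBounded_closedBall (x := (0 : C2)) (r := 3)).subset fun w hw => ?_
  obtain ⟨h1, h2, h3⟩ := rho_bounds w (le_of_eq hw)
  rw [mem_closedBall_zero_iff]
  have h4 := Complex.norm_le_abs_re_add_abs_im (w 0)
  have h5 := norm_le_C2 w
  linarith

lemma measure_bD : (μH[3] : Measure C2) bD < ⊤ := by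
  refine isCompact_bD.measure_lt_top_of_nhdsWithin fun z0 hz0 => ?_
  obtain ⟨φ, π, j, hφ, hπ, hev, -, -, -⟩ := chart_exists z0 hz0
  obtain ⟨J, hJ, -, hmap⟩ := area_graph hφ π hπ
  set G : Set C2 := {w | φ (π w) = w} with hG
  have hball : MeasurableSet (Metric.closedBall (π z0) (1:ℝ)) :=
    Metric.isClosed_closedBall.measurableSet
  refine ⟨π ⁻¹' (Metric.closedBall (π z0) 1) ∩ G, ?_, ?_⟩
  · filter_upwards [self_mem_nhdsWithin, nhdsWithin_le_nhds hev, nhdsWithin_le_nhds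
      (π.continuous.tendsto z0 (Metric.closedBall_mem_nhds _ one_pos))] with w h1 h2 h3
    exact ⟨h3, h2.mp h1⟩
  · rw [← Measure.restrict_apply (π.continuous.measurable hball),
      ← Measure.map_apply π.continuous.measurable hball, hmap, withDensity_apply _ hball]
    have h1 : IntegrableOn J (Metric.closedBall (π z0) 1) :=
      hJ.continuous.continuousOn.integrableOn_compact (isCompact_closedBall _ _)
    exact h1.lintegral_lt_top

instance finite_bD : IsFiniteMeasure ((μH[3] : Measure C2).restrict bD) :=
  ⟨by rw [Measure.restrict_apply_univ]; exact measure_bD⟩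

lemma continuous_Delta : Continuous fun p : C2 × C2 => Delta p.1 p.2 := contDiff_Delta.continuous

lemma meas_int (g : C2 → ℂ) (hg : Continuous g) (z : C2) :
    Measurable fun w => g w / (Delta w z) ^ 2 :=
  hg.measurable.div
    ((continuous_Delta.comp (continuous_id.prodMk continuous_const)).measurable.pow_const 2)

lemma bound_int (g : C2 → ℂ) (hg : Continuous g) (c : ℝ) (hc : 0 < c) : ∃ B : ℝ, ∀ z,
    (∀ w ∈ bD, g w ≠ 0 → c ≤ ‖Delta w z‖) →
    ∀ᵐ w ∂((μH[3] : Measure C2).restrict bD), ‖g w / (Delta w z) ^ 2‖ ≤ B := by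
  obtain ⟨B, hB⟩ := isCompact_bD.exists_bound_of_continuousOn hg.continuousOn
  refine ⟨|B| / c ^ 2, fun z hz => ?_⟩
  refine (ae_restrict_mem isClosed_bD.measurableSet).mono fun w hw => ?_
  by_cases h : g w = 0
  · rw [h]; simp; positivity
  · rw [norm_div, norm_pow]
    have h1 := hz w hw h
    have h2 := (hB w hw).trans (le_abs_self B)
    gcongr

lemma int_D (g : C2 → ℂ) (hg : Continuous g) (z : C2) (hz : z ∈ D) :
    IntegrableOn (fun w => g w / (Delta w z) ^ 2) bD μH[3] := by
  have hz' : rho z < 0 := hz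
  obtain ⟨B, hB⟩ := bound_int g hg (-rho z / 2) (by linarith)
  exact Integrable.of_bound (meas_int g hg z).aestronglyMeasurable B
    (hB z fun w hw _ => Delta_lower1 w z hw)

lemma away (g : C2 → ℂ) (hg : Continuous g) (z0 : C2) (c : ℝ) (hc : 0 < c)
    (h : ∀ᶠ z in 𝓝[D] z0, ∀ w ∈ bD, g w ≠ 0 → c ≤ ‖Delta w z‖)
    (h0 : ∀ w ∈ bD, g w ≠ 0 → Delta w z0 ≠ 0) :
    Tendsto (fun z => ∫ w in bD, g w / (Delta w z) ^ 2 ∂μH[3]) (𝓝[D] z0)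
      (𝓝 (∫ w in bD, g w / (Delta w z0) ^ 2 ∂μH[3])) := by
  obtain ⟨B, hB⟩ := bound_int g hg c hc
  refine tendsto_integral_filter_of_dominated_convergence (fun _ => B)
    (Eventually.of_forall fun z => (meas_int g hg z).aestronglyMeasurable)
    (h.mono fun z hz => hB z hz) (integrable_const _) ?_
  refine (ae_restrict_mem isClosed_bD.measurableSet).mono fun w hw => ?_
  by_cases hgw : g w = 0
  · simp only [hgw, zero_div]; exact tendsto_const_nhds
  · have hct : Continuous fun z => Delta w z :=
      continuous_Delta.comp (continuous_const.prodMk continuous_id)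
    exact (tendsto_const_nhds.div ((hct.tendsto z0).pow 2)
      (pow_ne_zero 2 (h0 w hw hgw))).mono_left nhdsWithin_le_nhds

lemma Delta_far (w z : C2) (hw : w ∈ bD) (hz : rho z ≤ 0) (d : ℝ) (hd : 0 < d)
    (h : d ≤ ‖w - z‖) : (d / 2) ^ 4 / 16 ≤ ‖Delta w z‖ := by
  have h1 := norm_le_C2 (w - z)
  have hj : ∃ j : Fin 2, d / 2 ≤ ‖w j - z j‖ := by
    by_contra hcon
    push Not at hcon
    have a := hcon 0
    have b := hcon 1
    have : ‖w - z‖ ≤ ‖w 0 - z 0‖ + ‖w 1 - z 1‖ := h1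
    linarith
  obtain ⟨j, hj⟩ := hj
  refine le_trans ?_ (Delta_lower2 w z hw hz j)
  gcongr

theorem limit_bdry (f : C2 → ℂ) (hf : ContDiff ℝ 1 f) (z0 : C2) (hz0 : z0 ∈ bD) :
    ∃ l, Tendsto (fun z => ∫ w in bD, f w / (Delta w z) ^ 2 ∂μH[3]) (𝓝[D] z0) (𝓝 l) := by
  obtain ⟨φ, π, j, hφ, hπ, hev, hj, h0, hM⟩ := chart_exists z0 hz0
  obtain ⟨J, hJ, hJ0, hmap⟩ := area_graph hφ π hπ
  set G : Set C2 := {w | φ (π w) = w} with hG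
  have hGm : MeasurableSet G :=
    (isClosed_eq (hφ.continuous.comp π.continuous) continuous_id).measurableSet
  obtain ⟨ε, hε, hεs⟩ := Metric.nhds_basis_closedBall.mem_iff.mp hev
  have hφt : Tendsto φ (𝓝 (π z0)) (𝓝 z0) := by
    have := hφ.continuous.tendsto (π z0); rwa [h0] at this
  obtain ⟨R0, hR0, hR0s⟩ := Metric.nhds_basis_closedBall.mem_iff.mp
    (hφt (Metric.closedBall_mem_nhds z0 hε))
  have hφb : ∀ x ∈ Metric.closedBall (π z0) R0, φ x ∈ bD := by
    intro x hx
    have h1 : φ x ∈ bD ↔ φ (π (φ x)) = φ x := hεs (hR0s hx)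
    rw [h1, hπ]
  obtain ⟨r, hr, hloc⟩ := local_limit (fun x z => Delta (φ x) z)
    (contDiff_Delta.comp ((hφ.comp contDiff_fst).prodMk contDiff_snd)) (π z0) z0 j (hj z0).symm
    (le_of_eq hz0) hM R0 hR0
    (by
      intro z hz x hx h
      have h1 := Delta_lower1 (φ x) z (hφb x hx)
      have hz' : rho z < 0 := hz
      rw [h, norm_zero] at h1; linarith)
    (by
      intro z hz x hx
      have h1 := Delta_lower2 (φ x) z (hφb x hx) hz j
      rwa [← hj (φ x), hπ] at h1)
  set δ := min ε (r / (‖π‖ + 1)) with hδ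
  have hπ1 : 0 < ‖π‖ + 1 := by positivity
  have hδ0 : 0 < δ := lt_min hε (by positivity)
  let β : ContDiffBump z0 := ⟨δ / 2, δ, by positivity, by linarith⟩
  have hβ0 : ∀ w, δ ≤ dist w z0 → β w = 0 := fun w hw => β.zero_of_le_dist hw
  have hβC : ContDiff ℝ 1 fun w => ((β w : ℝ) : ℂ) :=
    Complex.ofRealCLM.contDiff.comp β.contDiff
  set f1 : C2 → ℂ := fun w => (β w : ℂ) * f w with hf1
  set f2 : C2 → ℂ := fun w => (1 - (β w : ℂ)) * f w with hf2
  have hf1C : ContDiff ℝ 1 f1 := hβC.mul hf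
  have hf2C : ContDiff ℝ 1 f2 := (contDiff_const.sub hβC).mul hf
  set g : ℝ × ℂ → ℂ := fun x => (J x : ℂ) * f1 (φ x) with hg
  have hgC : ContDiff ℝ 1 g :=
    (Complex.ofRealCLM.contDiff.comp hJ).mul (hf1C.comp (hφ.of_le (by norm_num)))
  have hg0 : ∀ x ∉ Metric.closedBall (π z0) r, g x = 0 := by
    intro x hx
    have : β (φ x) = 0 := by
      apply hβ0
      by_contra hcon
      push Not at hcon
      apply hx
      rw [mem_closedBall_iff_norm]
      have e : x - π z0 = π (φ x - z0) := by rw [map_sub, hπ]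
      rw [e]
      rw [dist_eq_norm] at hcon
      have h2 : ‖φ x - z0‖ ≤ r / (‖π‖ + 1) := hcon.le.trans (min_le_right _ _)
      calc ‖π (φ x - z0)‖ ≤ ‖π‖ * ‖φ x - z0‖ := π.le_opNorm _
        _ ≤ (‖π‖ + 1) * (r / (‖π‖ + 1)) := by gcongr; linarith
        _ = r := by field_simp
    simp [hg, hf1, this]
  obtain ⟨l1, hl1⟩ := hloc g hgC hg0
  have htrans : ∀ z, ∫ w in bD, f1 w / (Delta w z) ^ 2 ∂μH[3] =
      ∫ x, g x / (Delta (φ x) z) ^ 2 := by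
    intro z
    set h : C2 → ℂ := fun w => f1 w / (Delta w z) ^ 2 with hh
    have hm : Measurable h := meas_int f1 hf1C.continuous z
    have s1 : ∫ w in bD, h w ∂μH[3] = ∫ w in G, h w ∂μH[3] := by
      rw [← integral_indicator isClosed_bD.measurableSet, ← integral_indicator hGm]
      congr 1
      ext1 w
      by_cases hw : dist w z0 < δ
      · have h1 : w ∈ bD ↔ w ∈ G :=
          hεs (Metric.mem_closedBall.mpr (hw.le.trans (min_le_left _ _)))
        by_cases h2 : w ∈ G
        · rw [indicator_of_mem h2, indicator_of_mem (h1.mpr h2)]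
        · rw [indicator_of_notMem h2, indicator_of_notMem (fun h3 => h2 (h1.mp h3))]
      · have : h w = 0 := by simp [hh, hf1, hβ0 w (not_lt.mp hw)]
        simp [indicator, this]
    have s2 : ∫ w in G, h w ∂μH[3] = ∫ w in G, h (φ (π w)) ∂μH[3] := by
      refine setIntegral_congr_fun hGm fun w hw => ?_
      have : φ (π w) = w := hw
      simp only [this]
    have s3 : ∫ w in G, h (φ (π w)) ∂μH[3] =
        ∫ x, h (φ x) ∂(Measure.map π ((μH[3] : Measure C2).restrict G)) := by
      rw [integral_map π.continuous.aemeasurable]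
      exact (hm.comp hφ.continuous.measurable).aestronglyMeasurable
    rw [s1, s2, s3, hmap, integral_withDensity_eq_integral_toReal_smul
      (hJ.continuous.measurable.ennreal_ofReal) (Eventually.of_forall fun x => ENNReal.ofReal_lt_top)]
    congr 1
    ext1 x
    simp only [ENNReal.toReal_ofReal (hJ0 x), hg, hh, Complex.real_smul]
    ring
  have hl1' : Tendsto (fun z => ∫ w in bD, f1 w / (Delta w z) ^ 2 ∂μH[3]) (𝓝[D] z0) (𝓝 l1) := by
    simp_rw [htrans]; exact hl1
  have hfar : ∀ z, dist z z0 ≤ δ / 4 → rho z ≤ 0 → ∀ w ∈ bD, f2 w ≠ 0 →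
      (δ / 4 / 2) ^ 4 / 16 ≤ ‖Delta w z‖ := by
    intro z hz hz2 w hw hne
    refine Delta_far w z hw hz2 _ (by positivity) ?_
    have h1 : δ / 2 ≤ dist w z0 := by
      by_contra hcon
      push Not at hcon
      apply hne
      have : β w = 1 := β.one_of_mem_closedBall (Metric.mem_closedBall.mpr hcon.le)
      simp [hf2, this]
    have h2 := dist_triangle w z z0
    rw [← dist_eq_norm]; linarith
  have hl2 := away f2 hf2C.continuous z0 ((δ / 4 / 2) ^ 4 / 16) (by positivity)
    (by
      filter_upwards [self_mem_nhdsWithin, nhdsWithin_le_nhds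
        (Metric.closedBall_mem_nhds z0 (show 0 < δ / 4 by positivity))] with z h1 h2
      exact hfar z h2 (show rho z < 0 from h1).le)
    (by
      intro w hw hne h
      have := hfar z0 (by rw [dist_self]; positivity) (le_of_eq hz0) w hw hne
      rw [h, norm_zero] at this
      have : 0 < (δ / 4 / 2) ^ 4 / 16 := by positivity
      linarith)
  refine ⟨_, (hl1'.add hl2).congr' ?_⟩
  filter_upwards [self_mem_nhdsWithin] with z hz
  rw [← integral_add (int_D f1 hf1C.continuous z hz) (int_D f2 hf2C.continuous z hz)]
  congr 1
  ext1 w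
  simp only [hf1, hf2]; ring

theorem limit_int (f : C2 → ℂ) (hf : Continuous f) (z0 : C2) (hz0 : z0 ∈ D) :
    Tendsto (fun z => ∫ w in bD, f w / (Delta w z) ^ 2 ∂μH[3]) (𝓝[D] z0)
      (𝓝 (∫ w in bD, f w / (Delta w z0) ^ 2 ∂μH[3])) := by
  have hz : rho z0 < 0 := hz0
  refine away f hf z0 (-rho z0 / 4) (by linarith) ?_ ?_
  · have : ∀ᶠ z in 𝓝 z0, rho z < rho z0 / 2 :=
      continuous_rho.continuousAt.eventually_lt_const (by linarith)
    filter_upwards [nhdsWithin_le_nhds this] with z h1 w hw _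
    have := Delta_lower1 w z hw
    linarith
  · intro w hw _ h
    have := Delta_lower1 w z0 hw
    rw [h, norm_zero] at this; linarith

/-- For `f` the restriction to `bD` of a `C¹` function on `ℂ²`, the function
`F(z) = ∫_{bD} f(w)·Δ(w,z)⁻² dH³(w)` is given by an absolutely convergent integral
for every `z ∈ D`, and it extends to a continuous function on the closure of `D`. -/
theorem stmt0 (f : C2 → ℂ) (hf : ContDiff ℝ 1 f) :
    (∀ z ∈ D, IntegrableOn (fun w => f w / (Delta w z) ^ 2) bD μH[3]) ∧
    ∃ G : C2 → ℂ, ContinuousOn G (closure D) ∧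
      ∀ z ∈ D, G z = ∫ w in bD, f w / (Delta w z) ^ 2 ∂μH[3] := by
  refine ⟨fun z hz => int_D f hf.continuous z hz,
    extendFrom D (fun z => ∫ w in bD, f w / (Delta w z) ^ 2 ∂μH[3]), ?_, ?_⟩
  · refine continuousOn_extendFrom subset_rfl fun z0 hz0 => ?_
    have hle : rho z0 ≤ 0 := by
      have : closure D ⊆ {z | rho z ≤ 0} :=
        closure_minimal (fun z hz => (show rho z < 0 from hz).le)
          (isClosed_le continuous_rho continuous_const)
      exact this hz0
    rcases hle.lt_or_eq with h | h
    · exact ⟨_, limit_int f hf.continuous z0 h⟩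
    · exact limit_bdry f hf z0 h
  · intro z hz
    exact extendFrom_eq (subset_closure hz) (limit_int f hf.continuous z hz)

end
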